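/- arXiv:2506.05778 — 4 statements merged into one kernel-verified Lean document; each statement's English description precedes it below -/
import Mathlib

section
/- For every n ≥ 4, the abelianization of Γ̂_n^4 is isomorphic to the free abelian group ℤ^{N_n}, where N_n = C(n,3) − 1. -/
/-- Ordered quadruples of elements of `Fin n`, used to index the generators `(ijkl)`. -/
abbrev Quad (n : ℕ) : Type := Fin n × Fin n × Fin n × Fin n

/-- The underlying set `{i, j, k, l}` of a quadruple `(i, j, k, l)`. -/
def qFinset {n : ℕ} (q : Quad n) : Finset (Fin n) := {q.1, q.2.1, q.2.2.1, q.2.2.2}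

/-- The four entries of the quadruple are pairwise distinct. -/
def qDistinct {n : ℕ} (q : Quad n) : Prop := (qFinset q).card = 4

/-- The defining relators of the group `Γ̂_n^4` of Kim–Manturov:
generators indexed by quadruples of distinct elements (non-distinct quadruples are killed),
commutativity relations (2), signed pentagon relations (3') and signed dihedral
relations (4'). -/
def gammaHatRels (n : ℕ) : Set (FreeGroup (Quad n)) :=
  {w | ∃ q : Quad n, ¬ qDistinct q ∧ w = FreeGroup.of q} ∪
  {w | ∃ q r : Quad n, qDistinct q ∧ qDistinct r ∧ (qFinset q ∩ qFinset r).card ≤ 2 ∧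
      w = FreeGroup.of q * FreeGroup.of r * (FreeGroup.of q)⁻¹ * (FreeGroup.of r)⁻¹} ∪
  {w | ∃ i j k l m : Fin n, ({i, j, k, l, m} : Finset (Fin n)).card = 5 ∧
      w = FreeGroup.of (i, j, k, l) * FreeGroup.of (i, j, l, m) * FreeGroup.of (j, k, l, m) *
        (FreeGroup.of (i, j, k, m))⁻¹ * (FreeGroup.of (i, k, l, m))⁻¹} ∪
  {w | ∃ i j k l : Fin n, qDistinct (i, j, k, l) ∧
      (w = FreeGroup.of (i, j, k, l) * FreeGroup.of (j, k, l, i) ∨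
       w = FreeGroup.of (i, j, k, l) * FreeGroup.of (l, k, j, i))}

/-- The group `Γ̂_n^4` of Kim–Manturov. -/
abbrev GammaHat (n : ℕ) : Type := PresentedGroup (gammaHatRels n)

/-- The generator `(ijkl)` of `Γ̂_n^4`. -/
def gh {n : ℕ} (q : Quad n) : GammaHat n := PresentedGroup.of q

theorem card_three_distinct {n : ℕ} {i j k l : Fin n} :
    qDistinct (i, j, k, l) ↔ i ≠ j ∧ i ≠ k ∧ i ≠ l ∧ j ≠ k ∧ j ≠ l ∧ k ≠ l := by
  unfold qDistinct qFinset
  constructor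
  · intro h
    simp only at h
    have key : ∀ a b c : Fin n, ({a, b, c} : Finset (Fin n)).card ≤ 3 :=
      fun a b c => Finset.card_le_three
    refine ⟨?_, ?_, ?_, ?_, ?_, ?_⟩ <;> rintro rfl
    · have := key i k l; simp_all
    · have := key i j l
      have e : ({i, j, i, l} : Finset (Fin n)) = {i, j, l} := by ext; simp; tauto
      rw [e] at h; omega
    · have := key i j k
      have e : ({i, j, k, i} : Finset (Fin n)) = {i, j, k} := by ext; simp; tauto
      rw [e] at h; omega
    · have := key i j l; simp_all
    · have := key i j k
      have e : ({i, j, k, j} : Finset (Fin n)) = {i, j, k} := by ext; simp; tauto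
      rw [e] at h; omega
    · have := key i j k; simp_all
  · rintro ⟨h1, h2, h3, h4, h5, h6⟩
    simp [*]

theorem five_distinct {n : ℕ} {i j k l m : Fin n} :
    ({i, j, k, l, m} : Finset (Fin n)).card = 5 ↔
      qDistinct (i, j, k, l) ∧ i ≠ m ∧ j ≠ m ∧ k ≠ m ∧ l ≠ m := by
  have e : ({i, j, k, l, m} : Finset (Fin n)) = insert m (qFinset (i, j, k, l)) := by
    ext; simp [qFinset]; tauto
  have h4 : (qFinset (i, j, k, l)).card ≤ 4 := Finset.card_le_four
  rw [e, Finset.card_insert_eq_ite]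
  unfold qDistinct
  have hm : m ∈ qFinset (i, j, k, l) ↔ m = i ∨ m = j ∨ m = k ∨ m = l := by simp [qFinset]
  split_ifs with h
  · rw [hm] at h
    constructor
    · intro h'; omega
    · rintro ⟨_, h1, h2, h3, h4⟩
      rcases h with h | h | h | h <;> simp_all
  · rw [hm] at h
    push Not at h
    constructor
    · intro h'; exact ⟨by omega, h.1.symm, h.2.1.symm, h.2.2.1.symm, h.2.2.2.symm⟩
    · intro h'; omega

/-- The class of a generator in the (additive) abelianization. -/
def dg {n : ℕ} (i j k l : Fin n) : Additive (Abelianization (GammaHat n)) :=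
  Additive.ofMul (Abelianization.of (gh (i, j, k, l)))

theorem dg_eq_zero {n : ℕ} {i j k l : Fin n} (h : ¬ qDistinct (i, j, k, l)) :
    dg i j k l = 0 := by
  have : gh (i, j, k, l) = 1 :=
    PresentedGroup.one_of_mem (Or.inl (Or.inl (Or.inl ⟨(i, j, k, l), h, rfl⟩)))
  simp [dg, this]

theorem rel_zero {n : ℕ} (w : FreeGroup (Quad n)) (hw : w ∈ gammaHatRels n) :
    Additive.ofMul (Abelianization.of (PresentedGroup.mk (gammaHatRels n) w)) = 0 := by
  have := PresentedGroup.one_of_mem hw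
  rw [this]; simp

theorem dg_rot {n : ℕ} (i j k l : Fin n) : dg i j k l = - dg j k l i := by
  by_cases h : qDistinct (i, j, k, l)
  · have := rel_zero _ (Or.inr ⟨i, j, k, l, h, Or.inl rfl⟩)
    rw [map_mul, map_mul, ofMul_mul] at this
    exact eq_neg_of_add_eq_zero_left this
  · have h' : ¬ qDistinct (j, k, l, i) := by
      rw [card_three_distinct] at h ⊢; tauto
    rw [dg_eq_zero h, dg_eq_zero h', neg_zero]

theorem dg_rev {n : ℕ} (i j k l : Fin n) : dg i j k l = - dg l k j i := by
  by_cases h : qDistinct (i, j, k, l)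
  · have := rel_zero _ (Or.inr ⟨i, j, k, l, h, Or.inr rfl⟩)
    rw [map_mul, map_mul, ofMul_mul] at this
    exact eq_neg_of_add_eq_zero_left this
  · have h' : ¬ qDistinct (l, k, j, i) := by
      rw [card_three_distinct] at h ⊢; tauto
    rw [dg_eq_zero h, dg_eq_zero h', neg_zero]

theorem dg_symm {n : ℕ} (i j k l : Fin n) : dg i j k l = dg k j i l := by
  rw [dg_rev, dg_rot, neg_neg]

theorem dg_pent {n : ℕ} {i j k l m : Fin n}
    (h : ({i, j, k, l, m} : Finset (Fin n)).card = 5) :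
    dg i j k l + dg i j l m + dg j k l m - dg i j k m - dg i k l m = 0 := by
  have := rel_zero _ (Or.inl (Or.inr ⟨i, j, k, l, m, h, rfl⟩))
  simp only [map_mul, map_inv, ofMul_mul, ofMul_inv] at this
  rw [sub_eq_add_neg, sub_eq_add_neg]
  exact this

/-- The auxiliary index. -/
def mIdx {n : ℕ} (hn : 4 ≤ n) (c : Fin n) : Fin n :=
  if c.1 = 1 then ⟨2, by omega⟩ else ⟨1, by omega⟩

/-- Generator attached to `a < b < v`. -/
def gTriple {n : ℕ} (hn : 4 ≤ n) (a b v : Fin n) : Additive (Abelianization (GammaHat n)) :=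
  if a.1 = 0 then dg a b (mIdx hn b) v else dg a ⟨0, by omega⟩ b v

/-- Spanning argument. -/
theorem dg_mem {n : ℕ} (hn : 4 ≤ n) (M : AddSubgroup (Additive (Abelianization (GammaHat n))))
    (hM : ∀ a b v : Fin n, a < b → b < v → gTriple hn a b v ∈ M) :
    ∀ i j k l : Fin n, dg i j k l ∈ M := by
  have main : ∀ N : ℕ, ∀ i j k l : Fin n, i.1 < N → j.1 < N → k.1 < N → l.1 < N →
      dg i j k l ∈ M := by
    intro N
    induction N with
    | zero => intro i j k l h; omega
    | succ N ih =>
      by_cases hN : N < n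
      swap
      · intro i j k l _ _ _ _
        have := i.2; have := j.2; have := k.2; have := l.2
        apply ih <;> omega
      obtain ⟨z, hz⟩ : ∃ z : Fin n, z.1 = 0 := ⟨⟨0, by omega⟩, rfl⟩
      obtain ⟨v, hv⟩ : ∃ v : Fin n, v.1 = N := ⟨⟨N, hN⟩, rfl⟩
      have g1' : ∀ b d : Fin n, b.1 ≠ 0 → b < d → d < v → dg b z d v ∈ M := by
        intro b d hb hbd hd
        have := hM b d v hbd hd
        rw [gTriple, if_neg hb] at this
        have e : z = ⟨0, by omega⟩ := Fin.ext hz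
        rw [e]; exact this
      have g1 : ∀ b d : Fin n, b.1 ≠ 0 → d.1 ≠ 0 → b ≠ d → b < v → d < v → dg b z d v ∈ M := by
        intro b d hb hd hbd hbv hdv
        rcases lt_or_gt_of_ne hbd with h | h
        · exact g1' b d hb h hdv
        · rw [dg_symm]; exact g1' d b hd h hbv
      have g2 : ∀ c : Fin n, c.1 ≠ 0 → c < v → dg z c (mIdx hn c) v ∈ M := by
        intro c hc hcv
        have := hM z c v (by rw [Fin.lt_def]; omega) hcv
        rwa [gTriple, if_pos hz] at this
      have P : ∀ b c d : Fin n, b.1 ≠ 0 → c.1 ≠ 0 → d.1 ≠ 0 → b ≠ c → b ≠ d → c ≠ d →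
          b < v → c < v → d < v → dg b c d v - dg z c b v ∈ M := by
        intro b c d hb hc hd hbc hbd hcd hbv hcv hdv
        have h5 : ({z, d, v, b, c} : Finset (Fin n)).card = 5 := by
          rw [five_distinct, card_three_distinct]
          simp only [ne_eq, Fin.ext_iff, Fin.lt_def] at *
          omega
        have hp := dg_pent h5
        have e1 := dg_rot b z d v
        have e2 := dg_rot c z d v
        have e3 : dg d v b c = dg b c d v := by
          rw [dg_rot b, dg_rot c, neg_neg]
        have e4 : dg z v b c = dg z c b v := by
          rw [dg_symm z c b v, dg_rot b, dg_rot c, neg_neg]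
        have m1 := g1 b d hb hd hbd hbv hdv
        have m2 := g1 c d hc hd hcd hcv hdv
        have m3 : dg z d b c ∈ M := by
          simp only [Fin.lt_def] at *
          apply ih <;> omega
        have : dg b c d v - dg z c b v = dg b z d v - dg z d b c - dg c z d v := by
          rw [e3, e4] at hp
          rw [e1, e2, ← sub_eq_zero]
          rw [← hp]; abel
        rw [this]
        exact M.sub_mem (M.sub_mem m1 m3) m2
      have F : ∀ b c : Fin n, b.1 ≠ 0 → c.1 ≠ 0 → b ≠ c → b < v → c < v → dg z c b v ∈ M := by
        intro b c hb hc hbc hbv hcv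
        by_cases hm : b = mIdx hn c
        · rw [hm]; exact g2 c hc hcv
        · have hmv : (mIdx hn c) < v ∧ (mIdx hn c).1 ≠ 0 ∧ mIdx hn c ≠ c := by
            unfold mIdx at *
            split_ifs at * <;>
            simp only [ne_eq, Fin.ext_iff, Fin.lt_def] at * <;> omega
          obtain ⟨h1, h2, h3⟩ := hmv
          have p1 := P b c (mIdx hn c) hb hc h2 hbc hm h3.symm hbv hcv h1
          have p2 := P (mIdx hn c) c b h2 hc hb h3 (Ne.symm hm) hbc.symm h1 hcv hbv
          rw [dg_symm (mIdx hn c) c b v] at p2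
          have p3 := M.add_mem (M.sub_mem p2 p1) (g2 c hc hcv)
          have : dg b c (mIdx hn c) v - dg z c (mIdx hn c) v -
            (dg b c (mIdx hn c) v - dg z c b v) + dg z c (mIdx hn c) v = dg z c b v := by abel
          rwa [this] at p3
      have E : ∀ i j k : Fin n, i < v → j < v → k < v → dg i j k v ∈ M := by
        intro i j k hi hj hk
        by_cases hd : qDistinct (i, j, k, v)
        swap
        · rw [dg_eq_zero hd]; exact M.zero_mem
        rw [card_three_distinct] at hd
        obtain ⟨hij, hik, -, hjk, -, -⟩ := hd
        have ne0 : ∀ x : Fin n, x ≠ z → x.1 ≠ 0 := fun x hx h => hx (Fin.ext (by omega))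
        by_cases h1 : j = z
        · subst h1
          exact g1 i k (ne0 _ hij) (ne0 _ hjk.symm) hik hi hk
        by_cases h2 : i = z
        · subst h2
          exact F k j (ne0 _ hik.symm) (ne0 _ h1) hjk.symm hk hj
        by_cases h3 : k = z
        · subst h3
          rw [dg_symm]
          exact F i j (ne0 _ h2) (ne0 _ h1) hij hi hj
        have p := P i j k (ne0 _ h2) (ne0 _ h1) (ne0 _ h3) hij hik hjk hi hj hk
        have f := F i j (ne0 _ h2) (ne0 _ h1) hij hi hj
        simpa using M.add_mem p f
      intro i j k l hi hj hk hl
      by_cases hd : qDistinct (i, j, k, l)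
      swap
      · rw [dg_eq_zero hd]; exact M.zero_mem
      rw [card_three_distinct] at hd
      obtain ⟨h1, h2, h3, h4, h5, h6⟩ := hd
      have lt : ∀ x : Fin n, x.1 < N + 1 → x ≠ v → x < v := by
        intro x hx hxv
        rw [ne_eq, Fin.ext_iff] at hxv
        rw [Fin.lt_def]; omega
      by_cases c1 : l = v
      · subst c1; exact E _ _ _ (lt _ hi h3) (lt _ hj h5) (lt _ hk h6)
      by_cases c2 : i = v
      · subst c2
        rw [dg_rot, M.neg_mem_iff]
        exact E _ _ _ (lt _ hj h1.symm) (lt _ hk h2.symm) (lt _ hl h3.symm)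
      by_cases c3 : j = v
      · subst c3
        rw [dg_rot, dg_rot, neg_neg]
        exact E _ _ _ (lt _ hk h4.symm) (lt _ hl h5.symm) (lt _ hi h1)
      by_cases c4 : k = v
      · subst c4
        rw [dg_rot, dg_rot, neg_neg, dg_rot, M.neg_mem_iff]
        exact E _ _ _ (lt _ hl h6.symm) (lt _ hi h2) (lt _ hj h4)
      have a1 := lt _ hi c2
      have a2 := lt _ hj c3
      have a3 := lt _ hk c4
      have a4 := lt _ hl c1
      simp only [Fin.lt_def] at a1 a2 a3 a4
      apply ih <;> omega
  intro i j k l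
  exact main n i j k l i.2 j.2 k.2 l.2

theorem dg_top {n : ℕ} (M : AddSubgroup (Additive (Abelianization (GammaHat n))))
    (hM : ∀ i j k l : Fin n, dg i j k l ∈ M) : M = ⊤ := by
  rw [eq_top_iff]
  intro x _
  obtain ⟨y, hy⟩ := QuotientGroup.mk'_surjective _ (Additive.toMul x)
  have hx : x = Additive.ofMul (Abelianization.of y) := by
    exact (congrArg Additive.ofMul hy).symm
  rw [hx]
  induction y using PresentedGroup.induction_on with
  | _ w =>
    clear hx hy
    induction w using FreeGroup.induction_on with
    | C1 => simp
    | of q => exact hM q.1 q.2.1 q.2.2.1 q.2.2.2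
    | inv_of q _ =>
      rw [map_inv, map_inv, ofMul_inv]
      exact M.neg_mem (hM q.1 q.2.1 q.2.2.1 q.2.2.2)
    | mul a b ha hb =>
      rw [map_mul, map_mul, ofMul_mul]
      exact M.add_mem ha hb

/-- Triples. -/
abbrev Tri (n : ℕ) : Type := {s : Finset (Fin n) // s.card = 3}

/-- Indicator vector of a subset. -/
def ev {n : ℕ} (s : Finset (Fin n)) : Tri n → ℚ := fun t => if t.1 = s then 1 else 0

/-- Image vector of a generator. -/
def qv {n : ℕ} (i j k l : Fin n) : Tri n → ℚ :=
  ev {i, j, k} + ev {i, k, l} - ev {i, j, l} - ev {j, k, l}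

open Classical in
/-- Image of a generator. -/
noncomputable def qmap {n : ℕ} (q : Quad n) : Multiplicative (Tri n → ℚ) :=
  if qDistinct q then Multiplicative.ofAdd (qv q.1 q.2.1 q.2.2.1 q.2.2.2) else 1

theorem qmap_of {n : ℕ} {i j k l : Fin n} (h : qDistinct (i, j, k, l)) :
    qmap (i, j, k, l) = Multiplicative.ofAdd (qv i j k l) := if_pos h

theorem ev_rot {n : ℕ} (i j k : Fin n) : ev {i, j, k} = ev {j, k, i} := by
  congr 1; ext; simp; tauto

theorem ev_rev {n : ℕ} (i j k : Fin n) : ev {i, j, k} = ev {k, j, i} := by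
  congr 1; ext; simp; tauto

theorem qmap_rels {n : ℕ} : ∀ r ∈ gammaHatRels n, FreeGroup.lift (qmap (n := n)) r = 1 := by
  rintro r (((⟨q, hq, rfl⟩ | ⟨q, r, hq, hr, -, rfl⟩) | ⟨i, j, k, l, m, h, rfl⟩) |
    ⟨i, j, k, l, h, rfl | rfl⟩)
  · simp [qmap, hq]
  · simp only [map_mul, map_inv, FreeGroup.lift_apply_of]
    rw [mul_comm (qmap q)]; group
  · rw [five_distinct, card_three_distinct] at h
    simp only [map_mul, map_inv, FreeGroup.lift_apply_of]
    rw [qmap_of, qmap_of, qmap_of, qmap_of, qmap_of]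
    · simp only [← ofAdd_add, ← ofAdd_neg]
      rw [ofAdd_eq_one]
      unfold qv
      abel
    all_goals rw [card_three_distinct]; tauto
  · simp only [map_mul, map_inv, FreeGroup.lift_apply_of]
    rw [qmap_of h, qmap_of (by rw [card_three_distinct] at h ⊢; tauto)]
    rw [← ofAdd_add, ofAdd_eq_one]
    unfold qv
    rw [ev_rot i j k, ev_rot i k l, ev_rot i j l]
    abel
  · simp only [map_mul, map_inv, FreeGroup.lift_apply_of]
    rw [qmap_of h, qmap_of (by rw [card_three_distinct] at h ⊢; tauto)]
    rw [← ofAdd_add, ofAdd_eq_one]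
    unfold qv
    rw [ev_rev i j k, ev_rev i k l, ev_rev i j l, ev_rev j k l]
    abel

/-- The invariant map. -/
noncomputable def phi (n : ℕ) : Additive (Abelianization (GammaHat n)) →+ (Tri n → ℚ) :=
  MonoidHom.toAdditiveLeft (Abelianization.lift (PresentedGroup.toGroup (qmap_rels (n := n))))

theorem phi_dg {n : ℕ} {i j k l : Fin n} (h : qDistinct (i, j, k, l)) :
    phi n (dg i j k l) = qv i j k l := by
  have : PresentedGroup.toGroup (qmap_rels (n := n)) (gh (i, j, k, l)) = qmap (i, j, k, l) :=
    PresentedGroup.toGroup.of _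
  change Multiplicative.toAdd (Abelianization.lift (PresentedGroup.toGroup (qmap_rels (n := n)))
    (Abelianization.of (gh (i, j, k, l)))) = _
  rw [Abelianization.lift_apply_of, this, qmap_of h]; rfl

theorem ev_span {n : ℕ} (W : Submodule ℚ (Tri n → ℚ))
    (hW : ∀ i j k l : Fin n, qDistinct (i, j, k, l) → qv i j k l ∈ W)
    (s₀ : Tri n) (h₀ : ev s₀.1 ∈ W) : W = ⊤ := by
  have step : ∀ i j k l : Fin n, qDistinct (i, j, k, l) → ev {i, j, k} ∈ W → ev {j, k, l} ∈ W := by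
    intro i j k l h h1
    have a := hW i j k l h
    have b := hW i k j l (by rw [card_three_distinct] at h ⊢; tauto)
    have c : ev {j, k, l} = ev {i, j, k} - (1 / 2 : ℚ) • (qv i j k l + qv i k j l) := by
      unfold qv
      have x1 : ev {i, k, j} = ev {i, j, k} := by congr 1; ext; simp; tauto
      have x2 : ev {k, j, l} = ev {j, k, l} := by congr 1; ext; simp; tauto
      rw [x1, x2]
      module
    rw [c]
    exact W.sub_mem h1 (W.smul_mem _ (W.add_mem a b))
  have all : ∀ N : ℕ, ∀ s : Finset (Fin n), s.card = 3 → (s \ s₀.1).card = N → ev s ∈ W := by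
    intro N
    induction N with
    | zero =>
      intro s hs h
      rw [Finset.card_eq_zero, Finset.sdiff_eq_empty_iff_subset] at h
      rw [Finset.eq_of_subset_of_card_le h (by rw [hs, s₀.2])]
      exact h₀
    | succ N ih =>
      intro s hs h
      obtain ⟨x, hx⟩ : (s \ s₀.1).Nonempty := by rw [← Finset.card_pos]; omega
      have hc : (s \ s₀.1).card = (s₀.1 \ s).card := Finset.card_sdiff_comm (by rw [hs, s₀.2])
      obtain ⟨y, hy⟩ : (s₀.1 \ s).Nonempty := by rw [← Finset.card_pos]; omega
      rw [Finset.mem_sdiff] at hx hy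
      have h2 : (s.erase x).card = 2 := by rw [Finset.card_erase_of_mem hx.1, hs]
      obtain ⟨j, k, hjk, hs2⟩ := Finset.card_eq_two.1 h2
      have hsx : s = {j, k, x} := by
        rw [← Finset.insert_erase hx.1, hs2]; ext; simp; tauto
      have hxj : x ∉ ({j, k} : Finset (Fin n)) := by rw [← hs2]; simp
      have hd : qDistinct (y, j, k, x) := by
        have := hy.2
        rw [hsx] at this
        simp only [Finset.mem_insert, Finset.mem_singleton, not_or] at this hxj
        rw [card_three_distinct]
        refine ⟨this.1, this.2.1, this.2.2, hjk, Ne.symm hxj.1, Ne.symm hxj.2⟩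
      have hd' := hd
      rw [card_three_distinct] at hd'
      rw [hsx]
      apply step y j k x hd
      apply ih
      · rw [Finset.card_eq_three]
        exact ⟨y, j, k, hd'.1, hd'.2.1, hd'.2.2.2.1, rfl⟩
      · have : ({y, j, k} : Finset (Fin n)) \ s₀.1 = (s \ s₀.1).erase x := by
          rw [← hs2]
          ext w
          simp only [Finset.mem_sdiff, Finset.mem_insert, Finset.mem_erase]
          constructor
          · rintro ⟨rfl | h, h'⟩
            · exact absurd hy.1 h'
            · exact ⟨h.1, h.2, h'⟩
          · rintro ⟨h, h', h''⟩
            exact ⟨Or.inr ⟨h, h'⟩, h''⟩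
        rw [this, Finset.card_erase_of_mem (by rw [Finset.mem_sdiff]; exact hx), h]
        rfl
  rw [eq_top_iff, ← (Pi.basisFun ℚ (Tri n)).span_eq, Submodule.span_le]
  rintro _ ⟨t, rfl⟩
  have : (Pi.basisFun ℚ (Tri n)) t = ev t.1 := by
    ext u
    simp [ev, Pi.single_apply, Subtype.ext_iff]
  rw [this]
  exact all _ _ t.2 rfl

/-- The family of generators, indexed by triples. -/
def gT {n : ℕ} (hn : 4 ≤ n) (t : Tri n) : Additive (Abelianization (GammaHat n)) :=
  gTriple hn (t.1.orderEmbOfFin t.2 0) (t.1.orderEmbOfFin t.2 1) (t.1.orderEmbOfFin t.2 2)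

theorem gT_eq {n : ℕ} (hn : 4 ≤ n) (a b v : Fin n) (hab : a < b) (hbv : b < v)
    (h : ({a, b, v} : Finset (Fin n)).card = 3) :
    gT hn ⟨{a, b, v}, h⟩ = gTriple hn a b v := by
  have : ![a, b, v] = ({a, b, v} : Finset (Fin n)).orderEmbOfFin h := by
    apply Finset.orderEmbOfFin_unique
    · intro x; fin_cases x <;> simp
    · rw [Fin.strictMono_iff_lt_succ]
      intro i; fin_cases i <;> simpa
  unfold gT
  rw [← this]; rfl

theorem card3 {n : ℕ} {a b v : Fin n} (hab : a < b) (hbv : b < v) :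
    ({a, b, v} : Finset (Fin n)).card = 3 :=
  Finset.card_eq_three.2 ⟨a, b, v, hab.ne, (hab.trans hbv).ne, hbv.ne, rfl⟩

/-- The base triple. -/
def t0 {n : ℕ} (hn : 4 ≤ n) : Tri n :=
  ⟨{⟨0, by omega⟩, ⟨1, by omega⟩, ⟨2, by omega⟩}, card3 (by simp [Fin.lt_def]) (by simp [Fin.lt_def])⟩

theorem gT_t0 {n : ℕ} (hn : 4 ≤ n) : gT hn (t0 hn) = 0 := by
  rw [t0, gT_eq _ _ _ _ (by simp [Fin.lt_def]) (by simp [Fin.lt_def]), gTriple, if_pos rfl]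
  apply dg_eq_zero
  rw [card_three_distinct]
  simp [mIdx]

theorem gT_mem {n : ℕ} (hn : 4 ≤ n) (M : AddSubgroup (Additive (Abelianization (GammaHat n))))
    (h : ∀ t : Tri n, t ≠ t0 hn → gT hn t ∈ M) : M = ⊤ := by
  apply dg_top
  apply dg_mem hn
  intro a b v hab hbv
  rw [← gT_eq hn a b v hab hbv (card3 hab hbv)]
  by_cases ht : (⟨{a, b, v}, card3 hab hbv⟩ : Tri n) = t0 hn
  · rw [ht, gT_t0]; exact M.zero_mem
  · exact h _ ht

theorem indepQ {n : ℕ} (hn : 4 ≤ n) :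
    LinearIndependent ℚ (fun t : {t : Tri n // t ≠ t0 hn} => phi n (gT hn t.1)) := by
  classical
  let f : Tri n → (Tri n → ℚ) := fun t => if t = t0 hn then ev (t0 hn).1 else phi n (gT hn t)
  have hf : LinearIndependent ℚ f := by
    apply linearIndependent_of_top_le_span_of_card_eq_finrank
    · rw [top_le_iff]
      apply ev_span _ _ (t0 hn)
      · exact Submodule.subset_span ⟨t0 hn, if_pos rfl⟩
      · intro i j k l h
        rw [← phi_dg h]
        have := gT_mem hn ((Submodule.span ℚ (Set.range f)).toAddSubgroup.comap (phi n)) (by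
          intro t ht
          exact Submodule.subset_span ⟨t, if_neg ht⟩)
        have h2 : dg i j k l ∈ (Submodule.span ℚ (Set.range f)).toAddSubgroup.comap (phi n) := by
          rw [this]; trivial
        exact h2
    · simp
  have := hf.comp (fun t : {t : Tri n // t ≠ t0 hn} => t.1) Subtype.val_injective
  convert this using 1
  ext t u
  simp [f, t.2]

/-- For every `n ≥ 4`, the abelianization of `Γ̂_n^4` is isomorphic to the free abelian group
`ℤ^{N_n}`, where `N_n = C(n,3) - 1`. -/
theorem gammaHat_abelianization (n : ℕ) (hn : 4 ≤ n) :
    Nonempty (Abelianization (GammaHat n) ≃* Multiplicative (Fin (n.choose 3 - 1) → ℤ)) := by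
  classical
  have hli : LinearIndependent ℤ (fun t : {t : Tri n // t ≠ t0 hn} => gT hn t.1) := by
    have h := (indepQ hn).restrict_scalars (R := ℤ) (by
      intro a b h; simpa using h)
    exact LinearIndependent.of_comp (phi n).toIntLinearMap h
  have hsp : ⊤ ≤ Submodule.span ℤ
      (Set.range (fun t : {t : Tri n // t ≠ t0 hn} => gT hn t.1)) := by
    have := gT_mem hn (Submodule.span ℤ
      (Set.range (fun t : {t : Tri n // t ≠ t0 hn} => gT hn t.1))).toAddSubgroup (by
        intro t ht
        exact Submodule.subset_span ⟨⟨t, ht⟩, rfl⟩)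
    intro x _
    have hx : x ∈ (⊤ : AddSubgroup (Additive (Abelianization (GammaHat n)))) := trivial
    rw [← this] at hx
    exact hx
  have hcard : Fintype.card {t : Tri n // t ≠ t0 hn} = n.choose 3 - 1 := by
    rw [Fintype.card_subtype_compl, Fintype.card_subtype_eq, Fintype.card_finset_len,
      Fintype.card_fin]
  let b := (Module.Basis.mk hli hsp).reindex (Fintype.equivFinOfCardEq hcard)
  exact ⟨AddEquiv.toMultiplicativeRight b.equivFun.toAddEquiv⟩
end

section
/- For every n ≥ 4, the abelianization of Γ_n^4 is isomorphic to (ℤ/2ℤ)^{N_n}, where N_n = C(n,3) − 1. -/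
/-- The defining relators of the group `Γ_n^4` of Kim–Manturov:
generators indexed by quadruples of distinct elements (non-distinct quadruples are killed),
involutive relations (1), commutativity relations (2), pentagon relations (3) and dihedral
relations (4). -/
def gammaRels (n : ℕ) : Set (FreeGroup (Quad n)) :=
  {w | ∃ q : Quad n, ¬ qDistinct q ∧ w = FreeGroup.of q} ∪
  {w | ∃ q : Quad n, qDistinct q ∧ w = FreeGroup.of q * FreeGroup.of q} ∪
  {w | ∃ q r : Quad n, qDistinct q ∧ qDistinct r ∧ (qFinset q ∩ qFinset r).card ≤ 2 ∧
      w = FreeGroup.of q * FreeGroup.of r * (FreeGroup.of q)⁻¹ * (FreeGroup.of r)⁻¹} ∪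
  {w | ∃ i j k l m : Fin n, ({i, j, k, l, m} : Finset (Fin n)).card = 5 ∧
      w = FreeGroup.of (i, j, k, l) * FreeGroup.of (i, j, l, m) * FreeGroup.of (j, k, l, m) *
        FreeGroup.of (i, j, k, m) * FreeGroup.of (i, k, l, m)} ∪
  {w | ∃ i j k l : Fin n, qDistinct (i, j, k, l) ∧
      (w = FreeGroup.of (i, j, k, l) * (FreeGroup.of (j, k, l, i))⁻¹ ∨
       w = FreeGroup.of (i, j, k, l) * (FreeGroup.of (l, k, j, i))⁻¹)}

/-- The group `Γ_n^4` of Kim–Manturov. -/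
abbrev Gamma (n : ℕ) : Type := PresentedGroup (gammaRels n)

/-- The generator `(ijkl)` of `Γ_n^4`. -/
def gg {n : ℕ} (q : Quad n) : Gamma n := PresentedGroup.of q

section Core

theorem card4_iff {α : Type*} [DecidableEq α] (i j k l : α) :
    ({i, j, k, l} : Finset α).card = 4 ↔
      (i ≠ j ∧ i ≠ k ∧ i ≠ l ∧ j ≠ k ∧ j ≠ l ∧ k ≠ l) := by
  constructor
  · intro h
    have key : ∀ a b c : α, ({i, j, k, l} : Finset α) ≠ {a, b, c} := by
      intro a b c e
      have := Finset.card_le_three (a := a) (b := b) (c := c)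
      rw [← e] at this; omega
    refine ⟨?_, ?_, ?_, ?_, ?_, ?_⟩ <;> rintro rfl
    · exact key i k l (by ext; simp)
    · exact key i j l (by ext; simp; tauto)
    · exact key i j k (by ext; simp; tauto)
    · exact key i j l (by ext; simp)
    · exact key i j k (by ext; simp; tauto)
    · exact key i j k (by ext; simp)
  · rintro ⟨h1, h2, h3, h4, h5, h6⟩
    rw [Finset.card_insert_of_notMem (by simp; tauto),
      Finset.card_insert_of_notMem (by simp; tauto),
      Finset.card_insert_of_notMem (by simp; tauto), Finset.card_singleton]

theorem card5_of {α : Type*} [DecidableEq α] (i j k l m : α)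
    (hi : i ≠ j ∧ i ≠ k ∧ i ≠ l ∧ i ≠ m)
    (h : j ≠ k ∧ j ≠ l ∧ j ≠ m ∧ k ≠ l ∧ k ≠ m ∧ l ≠ m) :
    ({i, j, k, l, m} : Finset α).card = 5 := by
  rw [Finset.card_insert_of_notMem (by simp; tauto), (card4_iff j k l m).2 h]

theorem card5_imp {α : Type*} [DecidableEq α] (i j k l m : α)
    (h : ({i, j, k, l, m} : Finset α).card = 5) :
    (i ≠ j ∧ i ≠ k ∧ i ≠ l ∧ i ≠ m) ∧
    (j ≠ k ∧ j ≠ l ∧ j ≠ m ∧ k ≠ l ∧ k ≠ m ∧ l ≠ m) := by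
  have h4 : ({j, k, l, m} : Finset α).card ≤ 4 := Finset.card_le_four
  have hn : i ∉ ({j, k, l, m} : Finset α) := by
    intro hm
    rw [Finset.insert_eq_of_mem hm] at h
    omega
  rw [Finset.card_insert_of_notMem hn] at h
  refine ⟨by simpa using hn, (card4_iff j k l m).1 (by omega)⟩

/-- relations in additive form -/
structure XRel {n : ℕ} {A : Type*} [AddCommGroup A]
    (X : Fin n → Fin n → Fin n → Fin n → A) : Prop where
  two : ∀ x : A, x + x = 0
  kill : ∀ i j k l, ¬ (i ≠ j ∧ i ≠ k ∧ i ≠ l ∧ j ≠ k ∧ j ≠ l ∧ k ≠ l) → X i j k l = 0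
  rot : ∀ i j k l, X i j k l = X j k l i
  rev : ∀ i j k l, X i j k l = X l k j i
  pent : ∀ i j k l m, (i ≠ j ∧ i ≠ k ∧ i ≠ l ∧ i ≠ m) →
    (j ≠ k ∧ j ≠ l ∧ j ≠ m ∧ k ≠ l ∧ k ≠ m ∧ l ≠ m) →
    X i j k l + X i j l m + X j k l m + X i j k m + X i k l m = 0

variable {n : ℕ} {A : Type*} [AddCommGroup A]

def YY (o : Fin n) (X : Fin n → Fin n → Fin n → Fin n → A) (a b c : Fin n) : A :=
  X o a b c + X o a c b

def EE (o p q : Fin n) (X : Fin n → Fin n → Fin n → Fin n → A) (a c : Fin n) : A :=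
  if c = p then YY o X p q a else YY o X p q c + YY o X c p a

def PP (o p q : Fin n) (X : Fin n → Fin n → Fin n → Fin n → A) (a b c : Fin n) : A :=
  if a = o then EE o p q X b c else if b = o then EE o p q X a c else
  if c = o then EE o p q X a b else
  X o a b c + EE o p q X a b + EE o p q X b c

theorem XRel.eq_of_add {X : Fin n → Fin n → Fin n → Fin n → A} (h : XRel X) {x y : A}
    (e : x + y = 0) : x = y := by
  have := h.two y
  rw [← this] at e
  exact add_right_cancel e

theorem YY_symm (o : Fin n) (X : Fin n → Fin n → Fin n → Fin n → A) (a b c : Fin n) :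
    YY o X a b c = YY o X a c b := by
  unfold YY; abel

theorem YY_self {X : Fin n → Fin n → Fin n → Fin n → A} (h : XRel X) (o a b : Fin n) :
    YY o X a b b = 0 := h.two _

theorem XRel.flip {X : Fin n → Fin n → Fin n → Fin n → A} (h : XRel X) (o a b c : Fin n) :
    X o a b c = X o c b a := by
  rw [h.rev o a b c, ← h.rot o c b a]

theorem YY_tri {X : Fin n → Fin n → Fin n → Fin n → A} (h : XRel X) (o a b c : Fin n) :
    YY o X a b c + YY o X b a c + YY o X c a b = 0 := by
  unfold YY
  have h1 := h.flip o a b c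
  have h2 := h.flip o a c b
  have h3 := h.flip o b a c
  rw [h1, h2, h3]
  have t1 := h.two (X o c b a)
  have t2 := h.two (X o b c a)
  have t3 := h.two (X o c a b)
  linear_combination (norm := module) t1 + t2 + t3

theorem YY_cocycle {X : Fin n → Fin n → Fin n → Fin n → A} (h : XRel X) (o a b c d : Fin n)
    (hab : a ≠ b) (hac : a ≠ c) (had : a ≠ d) (hoa : o ≠ a) (hob : o ≠ b) (hoc : o ≠ c)
    (hod : o ≠ d) :
    YY o X a b c + YY o X a b d = YY o X a c d := by
  by_cases hbc : b = c
  · subst hbc; rw [YY_self h]; simp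
  by_cases hbd : b = d
  · subst hbd; rw [YY_self h, YY_symm o X a c b]; simp
  by_cases hcd : c = d
  · subst hcd; rw [YY_self h]; exact h.two _
  apply h.eq_of_add
  have e1 := h.pent o a b c d (by tauto) (by tauto)
  have e2 := h.pent o b c d a (by tauto) (by tauto)
  rw [h.rot a b c d] at e1
  unfold YY
  have f1 := h.flip o b d a
  have f2 := h.flip o b c a
  have f3 := h.flip o c d a
  rw [f1, f2, f3] at e2
  have t1 := h.two (X o b c d)
  have t2 := h.two (X b c d a)
  linear_combination (norm := module) e1 + e2 - t1 - t2

theorem EE_symm {X : Fin n → Fin n → Fin n → Fin n → A} (h : XRel X) (o p q a c : Fin n)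
    (hop : o ≠ p) (hoq : o ≠ q) (hpq : p ≠ q) (hoa : o ≠ a) (hoc : o ≠ c) (hac : a ≠ c) :
    EE o p q X a c = EE o p q X c a := by
  unfold EE
  by_cases hc : c = p
  · subst hc
    simp [hac, YY_self h]
  by_cases ha : a = p
  · subst ha
    simp [hc, YY_self h]
  rw [if_neg hc, if_neg ha]
  have c1 := YY_cocycle h o p q c a hpq (Ne.symm hc) (Ne.symm ha) hop hoq hoc hoa
  have c2 := YY_tri h o p c a
  apply h.eq_of_add
  rw [← c1] at c2
  rw [YY_symm o X c p a, YY_symm o X a p c] at *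
  rw [YY_symm o X c a p, YY_symm o X a c p] at *
  linear_combination (norm := module) c2

theorem EE_diff {X : Fin n → Fin n → Fin n → Fin n → A} (h : XRel X) (o p q a b c : Fin n)
    (hop : o ≠ p) (hoq : o ≠ q) (hpq : p ≠ q) (hoa : o ≠ a) (hob : o ≠ b) (hoc : o ≠ c)
    (hac : a ≠ c) (hab : a ≠ b) :
    EE o p q X a b + EE o p q X a c = YY o X a b c := by
  rw [EE_symm h o p q a b hop hoq hpq hoa hob hab, EE_symm h o p q a c hop hoq hpq hoa hoc hac]
  unfold EE
  by_cases ha : a = p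
  · subst ha
    simp only [if_true]
    exact YY_cocycle h o a q b c hpq hab hac hop hoq hob hoc
  · rw [if_neg ha, if_neg ha]
    have := YY_cocycle h o a p b c ha hab hac hoa hop hob hoc
    have t := h.two (YY o X p q a)
    linear_combination (norm := module) this + t

/-- goodness of base points -/
def Good (o p q : Fin n) : Prop := o ≠ p ∧ o ≠ q ∧ p ≠ q

theorem PP_swap12 {X : Fin n → Fin n → Fin n → Fin n → A} (h : XRel X) (o p q a b c : Fin n)
    (g : Good o p q) (hab : a ≠ b) (hac : a ≠ c) (hbc : b ≠ c) :
    PP o p q X a b c = PP o p q X b a c := by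
  obtain ⟨g1, g2, g3⟩ := g
  unfold PP
  by_cases ha : a = o
  · subst ha; simp [hab.symm]
  by_cases hb : b = o
  · subst hb; simp [ha]
  by_cases hc : c = o
  · subst hc; simp [ha, hb, EE_symm h c p q a b g1 g2 g3 (Ne.symm ha) (Ne.symm hb) hab]
  simp only [ha, hb, hc, if_false]
  have s1 := EE_symm h o p q a b g1 g2 g3 (Ne.symm ha) (Ne.symm hb) hab
  have d := EE_diff h o p q c a b g1 g2 g3 (Ne.symm hc) (Ne.symm ha) (Ne.symm hb) hbc.symm hac.symm
  have s2 := EE_symm h o p q c a g1 g2 g3 (Ne.symm hc) (Ne.symm ha) hac.symm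
  have s3 := EE_symm h o p q c b g1 g2 g3 (Ne.symm hc) (Ne.symm hb) hbc.symm
  rw [s2, s3] at d
  rw [← s1]
  unfold YY at d
  rw [h.flip o c a b, h.flip o c b a] at d
  have t1 := h.two (EE o p q X b c)
  have t2 := h.two (X o b a c)
  apply h.eq_of_add
  have t3 := h.two (EE o p q X a b)
  have t4 := h.two (X o a b c)
  linear_combination (norm := module) d + t2 + t3 + t4

theorem PP_swap13 {X : Fin n → Fin n → Fin n → Fin n → A} (h : XRel X) (o p q a b c : Fin n)
    (g : Good o p q) (hab : a ≠ b) (hac : a ≠ c) (hbc : b ≠ c) :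
    PP o p q X a b c = PP o p q X c b a := by
  obtain ⟨g1, g2, g3⟩ := g
  have s1 := fun h1 h2 => EE_symm h o p q a b g1 g2 g3 h1 h2 hab
  have s2 := fun h1 h2 => EE_symm h o p q a c g1 g2 g3 h1 h2 hac
  have s3 := fun h1 h2 => EE_symm h o p q b c g1 g2 g3 h1 h2 hbc
  unfold PP
  by_cases ha : a = o
  · subst ha; simp [hab.symm, hac.symm, s3 hab hac]
  by_cases hb : b = o
  · subst hb; simp [ha, hbc.symm, s2 hab.symm hbc]
  by_cases hc : c = o
  · subst hc; simp [ha, hb, s1 hac.symm hbc.symm]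
  simp only [ha, hb, hc, if_false]
  rw [s1 (Ne.symm ha) (Ne.symm hb), s3 (Ne.symm hb) (Ne.symm hc), h.flip o a b c]
  abel

theorem PP_congr {X : Fin n → Fin n → Fin n → Fin n → A} (h : XRel X) (o p q a b c a' b' c' : Fin n)
    (g : Good o p q) (hab : a ≠ b) (hac : a ≠ c) (hbc : b ≠ c)
    (e : ({a, b, c} : Finset (Fin n)) = {a', b', c'}) :
    PP o p q X a b c = PP o p q X a' b' c' := by
  have ha : a ∈ ({a', b', c'} : Finset (Fin n)) := by rw [← e]; simp
  have hb : b ∈ ({a', b', c'} : Finset (Fin n)) := by rw [← e]; simp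
  have hc : c ∈ ({a', b', c'} : Finset (Fin n)) := by rw [← e]; simp
  simp only [Finset.mem_insert, Finset.mem_singleton] at ha hb hc
  clear e
  rcases ha with rfl | rfl | rfl <;> rcases hb with rfl | rfl | rfl <;>
    rcases hc with rfl | rfl | rfl <;> first | contradiction | skip
  · rfl
  · rw [PP_swap12 h o p q a c b g hac hab hbc.symm, PP_swap13 h o p q c a b g hac.symm hbc.symm hab,
      PP_swap12 h o p q b a c g hab.symm hbc hac]
  · exact PP_swap12 h o p q _ _ _ g hab hac hbc
  · rw [PP_swap12 h o p q _ _ _ g hab hac hbc, PP_swap13 h o p q _ _ _ g hab.symm hbc hac]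
  · rw [PP_swap13 h o p q _ _ _ g hab hac hbc, PP_swap12 h o p q _ _ _ g hbc.symm hac.symm hab.symm]
  · exact PP_swap13 h o p q _ _ _ g hab hac hbc

theorem PP_base {X : Fin n → Fin n → Fin n → Fin n → A} (h : XRel X) (o p q : Fin n)
    (g : Good o p q) : PP o p q X o p q = 0 := by
  obtain ⟨g1, g2, g3⟩ := g
  unfold PP EE
  simp [g3.symm, YY_self h]

/-- the index type -/
abbrev II (o p q : Fin n) : Type := {t : Finset (Fin n) // t.card = 3 ∧ t ≠ {o, p, q}}

def e3 (o p q a b c : Fin n) : II o p q → ZMod 2 :=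
  fun t => if t.1 = {a, b, c} then 1 else 0

theorem e3_base (o p q : Fin n) : e3 o p q o p q = 0 := by
  funext t; simp [e3, t.2.2]

theorem e3_congr (o p q : Fin n) {a b c a' b' c' : Fin n}
    (e : ({a, b, c} : Finset (Fin n)) = {a', b', c'}) :
    e3 o p q a b c = e3 o p q a' b' c' := by
  funext t; simp [e3, e]

theorem e3_swap12 (o p q a b c : Fin n) : e3 o p q a b c = e3 o p q b a c :=
  e3_congr o p q (by ext; simp; tauto)

theorem e3_swap23 (o p q a b c : Fin n) : e3 o p q a b c = e3 o p q a c b :=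
  e3_congr o p q (by ext; simp; tauto)

theorem e3_degen (o p q a b : Fin n) : e3 o p q a a b = 0 := by
  funext t
  have : t.1 ≠ {a, a, b} := by
    intro e
    have h1 := t.2.1
    rw [e] at h1
    have := Finset.card_le_two (a := a) (b := b)
    simp at h1
    omega
  exact if_neg this

theorem w2 {ι : Type*} (x : ι → ZMod 2) : x + x = 0 := by
  funext i; exact CharTwo.add_self_eq_zero _

/-- the explicit image of a generator -/
def ph (o p q i j k l : Fin n) : II o p q → ZMod 2 :=
  if (i ≠ j ∧ i ≠ k ∧ i ≠ l ∧ j ≠ k ∧ j ≠ l ∧ k ≠ l) then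
    e3 o p q j k l + e3 o p q i k l + e3 o p q i j l + e3 o p q i j k +
      e3 o p q o i k + e3 o p q o j l
  else 0

theorem ph_rel (o p q : Fin n) : XRel (ph o p q) where
  two := w2
  kill i j k l h := if_neg h
  rot i j k l := by
    unfold ph
    by_cases h : (i ≠ j ∧ i ≠ k ∧ i ≠ l ∧ j ≠ k ∧ j ≠ l ∧ k ≠ l)
    · rw [if_pos h, if_pos (by tauto)]
      rw [e3_swap23 o p q j l i, e3_swap12 o p q j i l, e3_swap23 o p q k l i,
        e3_swap12 o p q k i l, e3_swap23 o p q j k i, e3_swap12 o p q j i k,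
        e3_swap23 o p q o k i]
      abel
    · rw [if_neg h, if_neg (by tauto)]
  rev i j k l := by
    unfold ph
    by_cases h : (i ≠ j ∧ i ≠ k ∧ i ≠ l ∧ j ≠ k ∧ j ≠ l ∧ k ≠ l)
    · rw [if_pos h, if_pos (by tauto)]
      have r : ∀ a b c : Fin n, e3 o p q a b c = e3 o p q c b a :=
        fun a b c => e3_congr o p q (by ext; simp; tauto)
      rw [r j k l, r i k l, r i j l, r i j k, e3_swap23 o p q o i k, e3_swap23 o p q o j l]
      abel
    · rw [if_neg h, if_neg (by tauto)]
  pent i j k l m h1 h2 := by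
    unfold ph
    rw [if_pos (by tauto), if_pos (by tauto), if_pos (by tauto), if_pos (by tauto),
      if_pos (by tauto)]
    funext t
    simp only [Pi.add_apply, Pi.zero_apply]
    have h2 : (2 : ZMod 2) = 0 := rfl
    ring_nf
    simp [h2]

theorem ph_YY (o p q a b c : Fin n) (hoa : o ≠ a) (hob : o ≠ b) (hoc : o ≠ c)
    (hab : a ≠ b) (hac : a ≠ c) :
    YY o (ph o p q) a b c = e3 o p q o a b + e3 o p q o a c := by
  by_cases hbc : b = c
  · subst hbc; rw [YY_self (ph_rel o p q), w2]
  unfold YY ph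
  rw [if_pos (by tauto), if_pos (by tauto), e3_degen, e3_degen,
    e3_swap23 o p q a c b, e3_swap23 o p q o c b]
  have t1 := w2 (e3 o p q a b c)
  have t2 := w2 (e3 o p q o a b)
  have t3 := w2 (e3 o p q o a c)
  have t4 := w2 (e3 o p q o b c)
  linear_combination (norm := module) t1 + t2 + t3 + t4

theorem ph_EE (o p q a c : Fin n) (g : Good o p q) (hoa : o ≠ a) (hoc : o ≠ c) (hac : a ≠ c) :
    EE o p q (ph o p q) a c = e3 o p q o a c := by
  obtain ⟨g1, g2, g3⟩ := g
  unfold EE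
  by_cases hc : c = p
  · subst hc
    rw [if_pos rfl, ph_YY o c q c q a g1 g2 hoa g3 hac.symm, e3_base, zero_add, e3_swap23]
  · rw [if_neg hc, ph_YY o p q p q c g1 g2 hoc g3 (Ne.symm hc),
      ph_YY o p q c p a hoc g1 hoa hc hac.symm, e3_base, e3_swap23 o p q o c p,
      e3_swap23 o p q o c a]
    have := w2 (e3 o p q o p c)
    linear_combination (norm := module) this

theorem ph_PP (o p q a b c : Fin n) (g : Good o p q) (hab : a ≠ b) (hac : a ≠ c) (hbc : b ≠ c) :
    PP o p q (ph o p q) a b c = e3 o p q a b c := by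
  unfold PP
  by_cases ha : a = o
  · subst ha; rw [if_pos rfl, ph_EE _ _ _ _ _ g hab hac hbc]
  by_cases hb : b = o
  · subst hb; rw [if_neg ha, if_pos rfl, ph_EE _ _ _ _ _ g hab.symm hbc hac, e3_swap12]
  by_cases hc : c = o
  · subst hc
    rw [if_neg ha, if_neg hb, if_pos rfl, ph_EE _ _ _ _ _ g hac.symm hbc.symm hab, e3_swap12,
      e3_swap23]
  rw [if_neg ha, if_neg hb, if_neg hc, ph_EE _ _ _ _ _ g (Ne.symm ha) (Ne.symm hb) hab,
    ph_EE _ _ _ _ _ g (Ne.symm hb) (Ne.symm hc) hbc]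
  unfold ph
  rw [if_pos ⟨Ne.symm ha, Ne.symm hb, Ne.symm hc, hab, hac, hbc⟩, e3_degen]
  have t1 := w2 (e3 o p q o a b)
  have t2 := w2 (e3 o p q o a c)
  have t3 := w2 (e3 o p q o b c)
  linear_combination (norm := module) t1 + t2 + t3

theorem II_rep (o p q : Fin n) (t : II o p q) :
    ∃ abc : Fin n × Fin n × Fin n, abc.1 ≠ abc.2.1 ∧ abc.1 ≠ abc.2.2 ∧ abc.2.1 ≠ abc.2.2 ∧
      t.1 = {abc.1, abc.2.1, abc.2.2} := by
  obtain ⟨a, b, c, h⟩ := Finset.card_eq_three.1 t.2.1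
  exact ⟨(a, b, c), h⟩

/-- The abstract core: the inverse map. -/
theorem core {X : Fin n → Fin n → Fin n → Fin n → A} (h : XRel X) (o p q : Fin n)
    (g : Good o p q) (Φ : A →+ (II o p q → ZMod 2))
    (hΦ : ∀ i j k l, Φ (X i j k l) = ph o p q i j k l)
    (hgen : ∀ f : A →+ A, (∀ i j k l, f (X i j k l) = X i j k l) → ∀ x, f x = x) :
    Function.Bijective Φ := by
  classical
  let _ : Module (ZMod 2) A := AddCommGroup.zmodModule (n := 2) (fun x => by
    rw [two_nsmul]; exact h.two x)
  choose r hr using II_rep o p q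
  let ψ : II o p q → A := fun t => PP o p q X (r t).1 (r t).2.1 (r t).2.2
  let Ψ : (II o p q → ZMod 2) →ₗ[ZMod 2] A := (Pi.basisFun (ZMod 2) (II o p q)).constr ℕ ψ
  have hsingle : ∀ t : II o p q, Ψ (Pi.single t 1) = ψ t := by
    intro t
    have := (Pi.basisFun (ZMod 2) (II o p q)).constr_basis ℕ ψ t
    rwa [Pi.basisFun_apply] at this
  have hY : ∀ a b c, Φ (YY o X a b c) = YY o (ph o p q) a b c := by
    intro a b c; simp [YY, hΦ]
  have hE : ∀ a c, Φ (EE o p q X a c) = EE o p q (ph o p q) a c := by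
    intro a c; unfold EE; split_ifs <;> simp [hY]
  have hP : ∀ a b c, Φ (PP o p q X a b c) = PP o p q (ph o p q) a b c := by
    intro a b c; unfold PP; split_ifs <;> simp [hE, hΦ]
  have hsg : ∀ (t : II o p q) a b c, t.1 = {a, b, c} → e3 o p q a b c = Pi.single t 1 := by
    intro t a b c ht
    funext s
    simp only [e3, ← ht, Pi.single_apply, Subtype.ext_iff]
  -- Ψ on e3
  have hΨ : ∀ a b c, a ≠ b → a ≠ c → b ≠ c → Ψ (e3 o p q a b c) = PP o p q X a b c := by
    intro a b c hab hac hbc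
    by_cases hb : ({a, b, c} : Finset (Fin n)) = {o, p, q}
    · rw [e3_congr o p q hb, e3_base, PP_congr h o p q a b c o p q g hab hac hbc hb,
        PP_base h o p q g, map_zero]
    · let t : II o p q := ⟨{a, b, c}, Finset.card_eq_three.2 ⟨a, b, c, hab, hac, hbc, rfl⟩, hb⟩
      rw [hsg t a b c rfl, hsingle]
      obtain ⟨h1, h2, h3, h4⟩ := hr t
      exact (PP_congr h o p q a b c _ _ _ g hab hac hbc h4).symm
  constructor
  · have base : ∀ a b c, Ψ (ph o p q o a b c) = X o a b c := by
      intro a b c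
      by_cases hd : (o ≠ a ∧ o ≠ b ∧ o ≠ c ∧ a ≠ b ∧ a ≠ c ∧ b ≠ c)
      · unfold ph
        rw [if_pos hd, e3_degen]
        obtain ⟨h1, h2, h3, h4, h5, h6⟩ := hd
        simp only [map_add, map_zero]
        rw [hΨ a b c h4 h5 h6, hΨ o b c h2 h3 h6, hΨ o a c h1 h3 h5, hΨ o a b h1 h2 h4]
        simp only [PP, if_true, h1.symm, h2.symm, h3.symm, if_false]
        have t1 := h.two (EE o p q X a b)
        have t2 := h.two (EE o p q X a c)
        have t3 := h.two (EE o p q X b c)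
        linear_combination (norm := module) t1 + t2 + t3
      · rw [(ph_rel o p q).kill _ _ _ _ hd, h.kill _ _ _ _ hd, map_zero]
    have all : ∀ i j k l, Ψ (ph o p q i j k l) = X i j k l := by
      intro i j k l
      by_cases hi : i = o
      · subst hi; exact base _ _ _
      by_cases hj : j = o
      · subst hj; rw [(ph_rel j p q).rot, h.rot]; exact base _ _ _
      by_cases hk : k = o
      · subst hk
        rw [(ph_rel k p q).rot, (ph_rel k p q).rot, h.rot, h.rot j]; exact base _ _ _
      by_cases hl : l = o
      · subst hl
        rw [← (ph_rel l p q).rot, ← h.rot]; exact base _ _ _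
      by_cases hd : (i ≠ j ∧ i ≠ k ∧ i ≠ l ∧ j ≠ k ∧ j ≠ l ∧ k ≠ l)
      · have pe := h.pent o i j k l (by tauto) hd
        have pe' := (ph_rel o p q).pent o i j k l (by tauto) hd
        have := congrArg Ψ pe'
        simp only [map_add, map_zero, base] at this
        rw [← pe] at this
        exact add_left_cancel (add_right_cancel (add_right_cancel this))
      · rw [(ph_rel o p q).kill _ _ _ _ hd, h.kill _ _ _ _ hd, map_zero]
    have hid : ∀ x, (Ψ.toAddMonoidHom.comp Φ) x = x := by
      apply hgen
      intro i j k l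
      simp only [AddMonoidHom.comp_apply, hΦ]
      exact all i j k l
    exact Function.LeftInverse.injective (g := Ψ) hid
  · have hs : ∀ t : II o p q, Φ (Ψ (Pi.single t 1)) = Pi.single t 1 := by
      intro t
      rw [hsingle]
      obtain ⟨h1, h2, h3, h4⟩ := hr t
      rw [← hsg t _ _ _ h4]
      simp only [ψ]
      rw [hP, ph_PP o p q _ _ _ g h1 h2 h3]
    intro w
    refine ⟨Ψ w, ?_⟩
    let F : (II o p q → ZMod 2) →ₗ[ZMod 2] (II o p q → ZMod 2) :=
      (Φ.toZModLinearMap 2) ∘ₗ Ψ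
    have : F = LinearMap.id := by
      apply (Pi.basisFun (ZMod 2) (II o p q)).ext
      intro t
      rw [Pi.basisFun_apply]
      exact hs t
    exact congrArg (fun f => f w) this

theorem card_II (o p q : Fin n) (g : Good o p q) :
    Fintype.card (II o p q) = n.choose 3 - 1 := by
  classical
  rw [Fintype.card_subtype]
  have : (Finset.univ.filter fun t : Finset (Fin n) => t.card = 3 ∧ t ≠ {o, p, q}) =
      (Finset.powersetCard 3 Finset.univ).erase {o, p, q} := by
    ext t; simp [Finset.mem_powersetCard]; tauto
  rw [this, Finset.card_erase_of_mem, Finset.card_powersetCard]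
  · simp
  · simp only [Finset.mem_powersetCard, Finset.subset_univ, true_and]
    exact Finset.card_eq_three.2 ⟨o, p, q, g.1, g.2.1, g.2.2, rfl⟩

/-- generators in the abelianization -/
def XG (n : ℕ) (i j k l : Fin n) : Additive (Abelianization (Gamma n)) :=
  Additive.ofMul (Abelianization.of (gg (i, j, k, l)))

theorem qD_iff (i j k l : Fin n) : qDistinct (i, j, k, l) ↔
    (i ≠ j ∧ i ≠ k ∧ i ≠ l ∧ j ≠ k ∧ j ≠ l ∧ k ≠ l) := card4_iff i j k l

theorem gen_ext {M : Type*} [AddCommGroup M] (f g : Additive (Abelianization (Gamma n)) →+ M)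
    (h : ∀ i j k l, f (XG n i j k l) = g (XG n i j k l)) : f = g := by
  have : (AddMonoidHom.toMultiplicativeRight f : Abelianization (Gamma n) →* Multiplicative M) =
      AddMonoidHom.toMultiplicativeRight g := by
    apply Abelianization.hom_ext
    apply PresentedGroup.ext
    rintro ⟨i, j, k, l⟩
    exact h i j k l
  exact AddMonoidHom.toMultiplicativeRight.injective this

theorem gmk {w : FreeGroup (Quad n)} (h : w ∈ gammaRels n) :
    (Additive.ofMul (Abelianization.of (PresentedGroup.mk (gammaRels n) w))) = 0 := by
  rw [PresentedGroup.one_of_mem h, map_one]; rfl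

theorem XG_kill (i j k l : Fin n)
    (h : ¬ (i ≠ j ∧ i ≠ k ∧ i ≠ l ∧ j ≠ k ∧ j ≠ l ∧ k ≠ l)) : XG n i j k l = 0 :=
  gmk (w := FreeGroup.of (i, j, k, l))
    (Or.inl (Or.inl (Or.inl (Or.inl ⟨_, fun h' => h ((qD_iff _ _ _ _).1 h'), rfl⟩))))

theorem XG_two (x : Additive (Abelianization (Gamma n))) : x + x = 0 := by
  have : (AddMonoidHom.id _ + AddMonoidHom.id _ :
      Additive (Abelianization (Gamma n)) →+ _) = 0 := by
    apply gen_ext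
    intro i j k l
    simp only [AddMonoidHom.add_apply, AddMonoidHom.id_apply, AddMonoidHom.zero_apply]
    by_cases h : qDistinct (i, j, k, l)
    · exact gmk (w := FreeGroup.of (i, j, k, l) * FreeGroup.of (i, j, k, l))
        (Or.inl (Or.inl (Or.inl (Or.inr ⟨_, h, rfl⟩))))
    · rw [XG_kill i j k l (fun h' => h ((qD_iff _ _ _ _).2 h')), add_zero]
  exact DFunLike.congr_fun this x

theorem XG_rel (n : ℕ) : XRel (XG n) where
  two := XG_two
  kill := XG_kill
  rot i j k l := by
    by_cases h : (i ≠ j ∧ i ≠ k ∧ i ≠ l ∧ j ≠ k ∧ j ≠ l ∧ k ≠ l)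
    · have : XG n i j k l + -XG n j k l i = 0 :=
        gmk (w := FreeGroup.of (i, j, k, l) * (FreeGroup.of (j, k, l, i))⁻¹)
          (Or.inr ⟨i, j, k, l, (qD_iff _ _ _ _).2 h, Or.inl rfl⟩)
      exact add_neg_eq_zero.1 this
    · rw [XG_kill _ _ _ _ h, XG_kill j k l i (by tauto)]
  rev i j k l := by
    by_cases h : (i ≠ j ∧ i ≠ k ∧ i ≠ l ∧ j ≠ k ∧ j ≠ l ∧ k ≠ l)
    · have : XG n i j k l + -XG n l k j i = 0 :=
        gmk (w := FreeGroup.of (i, j, k, l) * (FreeGroup.of (l, k, j, i))⁻¹)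
          (Or.inr ⟨i, j, k, l, (qD_iff _ _ _ _).2 h, Or.inr rfl⟩)
      exact add_neg_eq_zero.1 this
    · rw [XG_kill _ _ _ _ h, XG_kill l k j i (by tauto)]
  pent i j k l m h1 h2 :=
    gmk (Or.inl (Or.inr ⟨i, j, k, l, m, card5_of i j k l m h1 h2, rfl⟩))

theorem lift_exists {W : Type*} [AddCommGroup W] {Z : Fin n → Fin n → Fin n → Fin n → W}
    (hZ : XRel Z) : ∃ Φ : Additive (Abelianization (Gamma n)) →+ W,
      ∀ i j k l, Φ (XG n i j k l) = Z i j k l := by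
  let f : Quad n → Multiplicative W := fun q => Multiplicative.ofAdd (Z q.1 q.2.1 q.2.2.1 q.2.2.2)
  have hf : ∀ w ∈ gammaRels n, FreeGroup.lift f w = 1 := by
    rintro w ((((⟨⟨i, j, k, l⟩, h, rfl⟩ | ⟨⟨i, j, k, l⟩, h, rfl⟩) | ⟨q, r, -, -, -, rfl⟩) |
      ⟨i, j, k, l, m, h, rfl⟩) | ⟨i, j, k, l, h, rfl | rfl⟩)
    · rw [FreeGroup.lift_apply_of]
      exact hZ.kill i j k l (fun h' => h ((qD_iff _ _ _ _).2 h'))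
    · rw [map_mul, FreeGroup.lift_apply_of]
      exact hZ.two _
    · simp only [map_mul, map_inv]
      rw [mul_comm (FreeGroup.lift f (FreeGroup.of q))]
      simp
    · simp only [map_mul, FreeGroup.lift_apply_of]
      obtain ⟨h1, h2⟩ := card5_imp i j k l m h
      exact hZ.pent i j k l m h1 h2
    · simp only [map_mul, map_inv, FreeGroup.lift_apply_of]
      rw [mul_inv_eq_one]
      exact hZ.rot i j k l
    · simp only [map_mul, map_inv, FreeGroup.lift_apply_of]
      rw [mul_inv_eq_one]
      exact hZ.rev i j k l
  refine ⟨MonoidHom.toAdditiveLeft (Abelianization.lift (PresentedGroup.toGroup hf)), ?_⟩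
  intro i j k l
  change Multiplicative.toAdd (Abelianization.lift (PresentedGroup.toGroup hf)
    (Abelianization.of (PresentedGroup.of (i, j, k, l)))) = _
  rw [Abelianization.lift_apply_of, PresentedGroup.toGroup.of]
  rfl

end Core

/-- For every `n ≥ 4`, the abelianization of `Γ_n^4` is isomorphic to `(ℤ/2ℤ)^{N_n}`,
where `N_n = C(n,3) - 1`. -/
theorem gamma_abelianization (n : ℕ) (hn : 4 ≤ n) :
    Nonempty (Abelianization (Gamma n) ≃* Multiplicative (Fin (n.choose 3 - 1) → ZMod 2)) := by
  let o : Fin n := ⟨0, by omega⟩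
  let p : Fin n := ⟨1, by omega⟩
  let q : Fin n := ⟨2, by omega⟩
  have g : Good o p q := by simp [Good, o, p, q]
  obtain ⟨Φ, hΦ⟩ := lift_exists (ph_rel o p q)
  have hb := core (XG_rel n) o p q g Φ hΦ (fun f hf x =>
    DFunLike.congr_fun (gen_ext f (AddMonoidHom.id _) hf) x)
  let e1 : Additive (Abelianization (Gamma n)) ≃+ (II o p q → ZMod 2) := AddEquiv.ofBijective Φ hb
  let e2 : II o p q ≃ Fin (n.choose 3 - 1) := Fintype.equivFinOfCardEq (card_II o p q g)
  let e3 : (II o p q → ZMod 2) ≃+ (Fin (n.choose 3 - 1) → ZMod 2) :=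
    (LinearEquiv.funCongrLeft (ZMod 2) (ZMod 2) e2.symm).toAddEquiv
  exact ⟨AddEquiv.toMultiplicativeRight (e1.trans e3)⟩
end

section
/- The map sending each generator (ijkl) of Γ_5^4 to 1 ∈ ℤ/2ℤ if 1 ∈ {i,j,k,l} and to 0 otherwise extends to a well-defined group homomorphism ν : Γ_5^4 → ℤ/2ℤ, and the abelianization of the kernel of ν is isomorphic to ℤ² ⊕ (ℤ/2ℤ)^6; in particular, the abelianization of Ker ν has a ℤ-direct summand. -/
namespace G5

abbrev M : Type := (Fin 2 → ℤ) × (Fin 6 → ZMod 2)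

instance (q : Quad 5) : Decidable (qDistinct q) := by unfold qDistinct; infer_instance

def opp (q : Quad 5) : ℕ :=
  if q.1 = 0 then q.2.2.1 else if q.2.1 = 0 then q.2.2.2 else
  if q.2.2.1 = 0 then q.1 else if q.2.2.2 = 0 then q.2.1 else
  if q.1 = 1 then q.2.2.1 else if q.2.1 = 1 then q.2.2.2 else
  if q.2.2.1 = 1 then q.1 else q.2.1

def idx (q : Quad 5) : Fin 15 :=
  match 10 - (q.1.val + q.2.1.val + q.2.2.1.val + q.2.2.2.val), opp q with
  | 4, 2 => 0
  | 3, 2 => 1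
  | 4, 3 => 2
  | 2, 3 => 3
  | 3, 4 => 4
  | 2, 4 => 5
  | 4, 1 => 6
  | 3, 1 => 7
  | 1, 3 => 8
  | 1, 4 => 9
  | 2, 1 => 10
  | 1, 2 => 11
  | 0, 3 => 12
  | 0, 4 => 13
  | 0, 2 => 14
  | _, _ => 0

def gq : Fin 15 → Quad 5 :=
  ![(0,1,2,3), (0,1,2,4), (0,1,3,2), (0,1,3,4), (0,1,4,2), (0,1,4,3), (0,2,1,3), (0,2,1,4),
    (0,2,3,4), (0,2,4,3), (0,3,1,4), (0,3,2,4), (1,2,3,4), (1,2,4,3), (1,3,2,4)]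

/-- torsion coordinates: x8, x10-x11, x6-x9, z12, z13, z14; free: x11, x9 -/
def X : Fin 15 → M :=
  ![(![0,0], ![0,0,0,0,0,0]),
    (![0,1], ![0,1,1,0,1,0]),
    (![1,0], ![1,0,0,1,0,1]),
    (![0,1], ![1,1,1,1,1,0]),
    (![1,0], ![0,1,1,0,0,1]),
    (![0,0], ![0,1,1,0,0,0]),
    (![0,1], ![0,0,1,0,0,0]),
    (![0,0], ![0,1,0,1,0,0]),
    (![0,0], ![1,0,0,0,0,0]),
    (![0,1], ![0,0,0,0,0,0]),
    (![1,0], ![0,1,0,0,0,0]),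
    (![1,0], ![0,0,0,0,0,0]),
    (![0,0], ![0,0,0,1,0,0]),
    (![0,0], ![0,0,0,0,1,0]),
    (![0,0], ![0,0,0,0,0,1])]

def u (q : Quad 5) (c : ZMod 2) : M :=
  if qDistinct q then (if c = 0 then X (idx q) else - X (idx q)) else 0

def nu (q : Quad 5) : ZMod 2 :=
  if qDistinct q then (if (0 : Fin 5) ∈ qFinset q then 1 else 0) else 0

theorem u_inv : ∀ (q : Quad 5) (c : ZMod 2), u q c + u q (c + nu q) = 0 := by decide +kernel

theorem nu_inv : ∀ (q : Quad 5), nu q + nu q = 0 := by decide +kernel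

def orb (q : Quad 5) : List (Quad 5) :=
  let a := fun q : Quad 5 => ((q.2.1, q.2.2.1, q.2.2.2, q.1) : Quad 5)
  let b := fun q : Quad 5 => ((q.2.2.2, q.2.2.1, q.2.1, q.1) : Quad 5)
  [q, a q, a (a q), a (a (a q)), b q, b (a q), b (a (a q)), b (a (a (a q)))]

theorem idx_orb : ∀ q : Quad 5, qDistinct q → gq (idx q) ∈ orb q := by decide +kernel

theorem rot_u : ∀ i j k l : Fin 5, qDistinct (i,j,k,l) →
   (∀ c, u (i,j,k,l) c = u (j,k,l,i) c) ∧ nu (i,j,k,l) = nu (j,k,l,i) ∧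
   (∀ c, u (i,j,k,l) c = u (l,k,j,i) c) ∧ nu (i,j,k,l) = nu (l,k,j,i) ∧
   qDistinct (j,k,l,i) := by decide +kernel

theorem pent_nu : ∀ i j k l m : Fin 5, ({i, j, k, l, m} : Finset (Fin 5)).card = 5 →
   nu (i,j,k,l) + (nu (i,j,l,m) + (nu (j,k,l,m) + (nu (i,j,k,m) + nu (i,k,l,m)))) = 0 := by
  decide +kernel

theorem pent_u : ∀ i j k l m : Fin 5, ({i, j, k, l, m} : Finset (Fin 5)).card = 5 → ∀ c,
   u (i,k,l,m) c + u (i,j,k,m) (c + nu (i,k,l,m)) +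
   u (j,k,l,m) (c + nu (i,k,l,m) + nu (i,j,k,m)) +
   u (i,j,l,m) (c + nu (i,k,l,m) + nu (i,j,k,m) + nu (j,k,l,m)) +
   u (i,j,k,l) (c + nu (i,k,l,m) + nu (i,j,k,m) + nu (j,k,l,m) + nu (i,j,l,m)) = 0 := by
  decide +kernel

def P (q : Quad 5) : Equiv.Perm (M × ZMod 2) where
  toFun x := (x.1 + u q x.2, x.2 + nu q)
  invFun x := (x.1 + u q x.2, x.2 + nu q)
  left_inv x := by
    simp only [add_assoc, u_inv, nu_inv, add_zero]
  right_inv x := by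
    simp only [add_assoc, u_inv, nu_inv, add_zero]

theorem P_apply (q : Quad 5) (x : M × ZMod 2) : P q x = (x.1 + u q x.2, x.2 + nu q) := rfl

theorem rel_cases {G : Type*} [Group G] (f : Quad 5 → G)
    (h0 : ∀ q, ¬ qDistinct q → f q = 1)
    (h1 : ∀ q, qDistinct q → f q * f q = 1)
    (h2 : ∀ i j k l m : Fin 5, ({i, j, k, l, m} : Finset (Fin 5)).card = 5 →
      f (i, j, k, l) * f (i, j, l, m) * f (j, k, l, m) * f (i, j, k, m) * f (i, k, l, m) = 1)
    (h3 : ∀ i j k l, qDistinct (i,j,k,l) → f (i,j,k,l) = f (j,k,l,i) ∧ f (i,j,k,l) = f (l,k,j,i)) :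
    ∀ r ∈ gammaRels 5, FreeGroup.lift f r = 1 := by
  rintro r ((((⟨q, hq, rfl⟩ | ⟨q, hq, rfl⟩) | ⟨q, s, hq, hs, hc, rfl⟩) | ⟨i,j,k,l,m,h,rfl⟩) |
    ⟨i,j,k,l,h,h'⟩)
  · simp [h0 q hq]
  · simp [h1 q hq]
  · exfalso
    have := Finset.card_union_add_card_inter (qFinset q) (qFinset s)
    have h5 := Finset.card_le_univ (qFinset q ∪ qFinset s)
    simp only [Fintype.card_fin] at h5
    unfold qDistinct at hq hs
    omega
  · simpa using h2 i j k l m h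
  · rcases h' with rfl | rfl
    · simp [← (h3 i j k l h).1]
    · simp [← (h3 i j k l h).2]

def ρ : Gamma 5 →* Equiv.Perm (M × ZMod 2) := PresentedGroup.toGroup (f := P) <| by
  apply rel_cases
  · intro q hq
    ext1 x
    simp [P_apply, u, nu, hq]
  · intro q hq
    ext1 x
    simp only [Equiv.Perm.mul_apply, P_apply, add_assoc, u_inv, nu_inv, add_zero,
      Equiv.Perm.one_apply]
  · intro i j k l m h
    ext1 x
    simp only [Equiv.Perm.mul_apply, P_apply, Equiv.Perm.one_apply]
    refine Prod.ext ?_ ?_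
    · have := pent_u i j k l m h x.2
      simp only [add_assoc] at this ⊢
      rw [this, add_zero]
    · have := pent_nu i j k l m h
      simp only
      linear_combination this
  · intro i j k l h
    obtain ⟨a, b, c, d, -⟩ := rot_u i j k l h
    constructor <;> ext1 x <;> simp only [P_apply, ← a, ← b, ← c, ← d]

theorem ρ_gg (q : Quad 5) : ρ (gg q) = P q := by
  simp [ρ, gg]

def ν : Gamma 5 →* Multiplicative (ZMod 2) :=
  PresentedGroup.toGroup (f := fun q => Multiplicative.ofAdd (nu q)) <| by
  apply rel_cases
  · intro q hq
    simp [nu, hq]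
  · intro q hq
    exact congrArg Multiplicative.ofAdd (nu_inv q)
  · intro i j k l m h
    have := pent_nu i j k l m h
    simp only [← ofAdd_add, add_assoc, this, ofAdd_zero]
  · intro i j k l h
    obtain ⟨a, b, c, d, -⟩ := rot_u i j k l h
    exact ⟨congrArg _ b, congrArg _ d⟩

theorem ν_gg (q : Quad 5) : ν (gg q) = Multiplicative.ofAdd (nu q) := by
  simp [ν, gg]

theorem gg_rel {w : FreeGroup (Quad 5)} (h : w ∈ gammaRels 5) :
    PresentedGroup.mk (gammaRels 5) w = 1 := PresentedGroup.one_of_mem h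

theorem gg_rot (i j k l : Fin 5) (h : qDistinct (i,j,k,l)) :
    gg (i,j,k,l) = gg (j,k,l,i) ∧ gg (i,j,k,l) = gg (l,k,j,i) := by
  constructor
  · exact mul_inv_eq_one.1 (gg_rel (w := FreeGroup.of (i, j, k, l) * (FreeGroup.of (j, k, l, i))⁻¹)
      (Or.inr ⟨i,j,k,l,h,Or.inl rfl⟩))
  · exact mul_inv_eq_one.1 (gg_rel (w := FreeGroup.of (i, j, k, l) * (FreeGroup.of (l, k, j, i))⁻¹)
      (Or.inr ⟨i,j,k,l,h,Or.inr rfl⟩))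

theorem gg_sq (q : Quad 5) (h : qDistinct q) : gg q * gg q = 1 :=
  gg_rel (w := FreeGroup.of q * FreeGroup.of q) (Or.inl (Or.inl (Or.inl (Or.inr ⟨q, h, rfl⟩))))

theorem gg_nd (q : Quad 5) (h : ¬ qDistinct q) : gg q = 1 :=
  gg_rel (w := FreeGroup.of q) (Or.inl (Or.inl (Or.inl (Or.inl ⟨q, h, rfl⟩))))

theorem gg_pent (i j k l m : Fin 5) (h : ({i, j, k, l, m} : Finset (Fin 5)).card = 5) :
    gg (i, j, k, l) * gg (i, j, l, m) * gg (j, k, l, m) * gg (i, j, k, m) * gg (i, k, l, m) = 1 :=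
  gg_rel (w := FreeGroup.of (i, j, k, l) * FreeGroup.of (i, j, l, m) * FreeGroup.of (j, k, l, m) *
        FreeGroup.of (i, j, k, m) * FreeGroup.of (i, k, l, m))
    (Or.inl (Or.inr ⟨i,j,k,l,m,h,rfl⟩))

theorem gg_idx (q : Quad 5) (h : qDistinct q) : gg q = gg (gq (idx q)) := by
  have a1 : ∀ q : Quad 5, qDistinct q → gg q = gg (q.2.1, q.2.2.1, q.2.2.2, q.1) :=
    fun q h => (gg_rot _ _ _ _ h).1
  have a2 : ∀ q : Quad 5, qDistinct q → gg q = gg (q.2.2.2, q.2.2.1, q.2.1, q.1) :=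
    fun q h => (gg_rot _ _ _ _ h).2
  have d : ∀ q : Quad 5, qDistinct q → qDistinct (q.2.1, q.2.2.1, q.2.2.2, q.1) :=
    fun q h => (rot_u _ _ _ _ h).2.2.2.2
  have d1 := d _ h
  have d2 := d _ d1
  have d3 := d _ d2
  have e1 := a1 _ h
  have e2 := e1.trans (a1 _ d1)
  have e3 := e2.trans (a1 _ d2)
  have := idx_orb q h
  simp only [orb, List.mem_cons, List.not_mem_nil, or_false] at this
  rcases this with h' | h' | h' | h' | h' | h' | h' | h' <;> rw [h']
  · exact e1
  · exact e2
  · exact e3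
  · exact a2 _ h
  · exact e1.trans (a2 _ d1)
  · exact e2.trans (a2 _ d2)
  · exact e3.trans (a2 _ d3)

def gen (i : Fin 15) : Gamma 5 := gg (gq i)

theorem pent_dist : ∀ i j k l m : Fin 5, ({i, j, k, l, m} : Finset (Fin 5)).card = 5 →
    qDistinct (i, j, k, l) ∧ qDistinct (i, j, l, m) ∧ qDistinct (j, k, l, m) ∧
    qDistinct (i, j, k, m) ∧ qDistinct (i, k, l, m) := by decide +kernel

theorem gen_pent (i j k l m : Fin 5) (h : ({i, j, k, l, m} : Finset (Fin 5)).card = 5) :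
    gen (idx (i, j, k, l)) * gen (idx (i, j, l, m)) * gen (idx (j, k, l, m)) *
      gen (idx (i, j, k, m)) * gen (idx (i, k, l, m)) = 1 := by
  obtain ⟨h1, h2, h3, h4, h5⟩ := pent_dist i j k l m h
  simp only [gen, ← gg_idx _ h1, ← gg_idx _ h2, ← gg_idx _ h3, ← gg_idx _ h4, ← gg_idx _ h5]
  exact gg_pent i j k l m h

theorem ind {p : Gamma 5 → Prop} (h1 : p 1) (hm : ∀ q x, qDistinct q → p x → p (gg q * x))
    (x : Gamma 5) : p x := by
  have hm' : ∀ q x, p x → p (gg q * x) := fun q x hx => by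
    by_cases h : qDistinct q
    · exact hm q x h hx
    · rw [gg_nd q h, one_mul]; exact hx
  have hi : ∀ q : Quad 5, (gg q)⁻¹ = gg q := fun q => by
    by_cases h : qDistinct q
    · exact inv_eq_of_mul_eq_one_left (gg_sq q h)
    · rw [gg_nd q h, inv_one]
  have hx : x ∈ Subgroup.closure (Set.range (PresentedGroup.of (rels := gammaRels 5))) := by
    rw [PresentedGroup.closure_range_of]; trivial
  induction hx using Subgroup.closure_induction_left with
  | one => exact h1
  | mul_left a ha y hy ih =>
    obtain ⟨q, rfl⟩ := ha
    exact hm' q y ih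
  | inv_mul_cancel a ha y hy ih =>
    obtain ⟨q, rfl⟩ := ha
    have := hm' q y ih
    rw [← hi q] at this
    exact this

/-- additive version of `ν` -/
def n (x : Gamma 5) : ZMod 2 := (ν x).toAdd

theorem n_one : n 1 = 0 := by simp [n]
theorem n_mul (x y) : n (x * y) = n x + n y := by simp [n]
theorem n_gg (q) : n (gg q) = nu q := by simp [n, ν_gg]

theorem ρ_shift (x : Gamma 5) : ∀ (m : M) (c : ZMod 2),
    ρ x (m, c) = (m + (ρ x (0, c)).1, c + n x) := by
  induction x using ind with
  | h1 => intro m c; simp [n_one]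
  | hm q x _ ih =>
    intro m c
    simp only [map_mul, Equiv.Perm.mul_apply, ρ_gg, P_apply, n_mul, n_gg]
    rw [ih m c, ih 0 c]
    simp only [zero_add, add_assoc]
    rw [add_comm (nu q)]

theorem n_ker (x : ν.ker) : n x = 0 := by
  have := x.2
  rw [MonoidHom.mem_ker] at this
  simp [n, this]

def φ : ν.ker →* Multiplicative M where
  toFun x := Multiplicative.ofAdd (ρ x (0, 0)).1
  map_one' := by simp
  map_mul' x y := by
    rw [← ofAdd_add]
    congr 1
    simp only [Subgroup.coe_mul, map_mul, Equiv.Perm.mul_apply]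
    rw [ρ_shift y, ρ_shift x]
    simp [n_ker, add_comm]

def t : Gamma 5 := gg (0,1,2,3)

def T (c : ZMod 2) : Gamma 5 := if c = 0 then 1 else t

theorem tt : t * t = 1 := gg_sq _ (by decide)
theorem n_t : n t = 1 := by rw [t, n_gg]; decide
theorem n_T (c) : n (T c) = c := by
  unfold T; split_ifs with h
  · rw [n_one, h]
  · rw [n_t]; revert c; decide
theorem TT (c) : T c * T c = 1 := by
  unfold T; split_ifs with h
  · simp
  · exact tt
theorem Tt (c) : T (c + 1) * t * T c = 1 := by
  have : c = 0 ∨ c = 1 := by revert c; decide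
  rcases this with rfl | rfl
  · simp [T, tt]
  · have : (1 + 1 : ZMod 2) = 0 := by decide
    simp [T, tt, this]

abbrev A : Type := Additive (Abelianization ν.ker)

theorem mem_ker_of {x : Gamma 5} (h : n x = 0) : x ∈ ν.ker := by
  rw [MonoidHom.mem_ker]; exact h

theorem F_mem (c : ZMod 2) (x : Gamma 5) : T (c + n x) * x * T c ∈ ν.ker := by
  apply mem_ker_of
  rw [n_mul, n_mul, n_T, n_T]
  generalize n x = d
  revert c d; decide

def F (c : ZMod 2) (x : Gamma 5) : A :=
  Additive.ofMul (Abelianization.of ⟨T (c + n x) * x * T c, F_mem c x⟩)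

theorem F_congr {c x} (y : ν.ker) (h : T (c + n x) * x * T c = y) :
    F c x = Additive.ofMul (Abelianization.of y) := by
  unfold F; congr 2; exact Subtype.ext h

theorem F_one (c) : F c 1 = 0 := by
  rw [F_congr 1]
  · simp
  · simp [n_one, TT]

theorem F_t (c) : F c t = 0 := by
  rw [F_congr 1]
  · simp
  · rw [n_t, Tt]; rfl

theorem F_mul (c x y) : F c (x * y) = F (c + n y) x + F c y := by
  rw [F_congr (⟨T (c + n y + n x) * x * T (c + n y), F_mem _ x⟩ * ⟨T (c + n y) * y * T c, F_mem c y⟩)]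
  · rfl
  · simp only [Subgroup.coe_mul, n_mul]
    rw [show T (c + n y + n x) * x * T (c + n y) * (T (c + n y) * y * T c) =
      T (c + n y + n x) * x * (T (c + n y) * T (c + n y)) * y * T c by group, TT]
    rw [add_assoc, add_comm (n y)]; group

theorem F_ker (x : ν.ker) : F 0 x = Additive.ofMul (Abelianization.of x) := by
  apply F_congr; simp [n_ker, T]

def Φ : A →+ M := MonoidHom.toAdditiveLeft (Abelianization.lift φ)

theorem Φ_of (x : ν.ker) : Φ (Additive.ofMul (Abelianization.of x)) = (ρ x (0, 0)).1 := by
  simp [Φ, φ]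

theorem ρ_t (x) : ρ t x = (x.1, x.2 + 1) := by
  rw [t, ρ_gg, P_apply]
  have h1 : ∀ c, u (0,1,2,3) c = 0 := by decide
  have h2 : nu (0,1,2,3) = 1 := by decide
  rw [h1, h2, add_zero]

theorem ρ_T (c x) : ρ (T c) x = (x.1, x.2 + c) := by
  unfold T; split_ifs with h
  · simp [h]
  · have : c = 1 := by revert c; decide
    rw [ρ_t, this]

theorem Φ_F (c x) : Φ (F c x) = (ρ x (0, c)).1 := by
  rw [F, Φ_of]
  simp only [map_mul, Equiv.Perm.mul_apply, ρ_T, zero_add]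

theorem gen_dist : ∀ i, qDistinct (gq i) := by decide
theorem gen_val : ∀ i, u (gq i) 0 = X i := by decide +kernel
theorem gen_sq (i) : gen i * gen i = 1 := gg_sq _ (gen_dist i)
theorem gen_zero : gen 0 = t := rfl
theorem n_gen (i) : n (gen i) = if i.val < 12 then 1 else 0 := by
  rw [gen, n_gg]; revert i; decide +kernel
theorem Φ_gen (i) : Φ (F 0 (gen i)) = X i := by
  rw [Φ_F, gen, ρ_gg, P_apply, zero_add, gen_val]

theorem lin {A : Type*} [AddCommGroup A] (x0 x1 x2 x3 x4 x5 x6 x7 x8 x9 x10 x11 x12 x13 x14 : A)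
    (hx : x0 = 0) (t12 : x12 + x12 = 0) (t13 : x13 + x13 = 0) (t14 : x14 + x14 = 0)
    (h0 : x8 + (-x1) + x12 + x3 + (-x0) = 0)
    (h1 : x11 + (-x5) + x14 + x0 + (-x4) = 0)
    (h2 : x7 + (-x11) + x12 + x10 + (-x0) = 0)
    (h3 : x9 + (-x0) + x13 + x5 + (-x1) = 0)
    (h4 : x11 + (-x3) + x14 + x1 + (-x2) = 0)
    (h5 : x1 + (-x10) + x13 + x11 + (-x6) = 0)
    (h6 : x8 + (-x4) + x12 + x2 + (-x5) = 0)
    (h7 : x10 + (-x8) + x14 + x7 + (-x2) = 0)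
    (h8 : x9 + (-x2) + x13 + x4 + (-x3) = 0)
    (h9 : x3 + (-x7) + x13 + x8 + (-x6) = 0)
    (h10 : x10 + (-x9) + x14 + x6 + (-x4) = 0)
    (h11 : x5 + (-x6) + x12 + x9 + (-x7) = 0) :
    x8 + x8 = 0 ∧ (x10 - x11) + (x10 - x11) = 0 ∧ (x6 - x9) + (x6 - x9) = 0 ∧
    x1 = x9 + (x6 - x9) + (x10 - x11) + x13 ∧
    x2 = x11 + x8 + x12 + x14 ∧
    x3 = x9 + (x6 - x9) + x8 + (x10 - x11) + x12 + x13 ∧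
    x4 = x11 + (x6 - x9) + (x10 - x11) + x14 ∧
    x5 = (x6 - x9) + (x10 - x11) ∧
    x7 = (x10 - x11) + x12 := by
  refine ⟨?_, ?_, ?_, ?_, ?_, ?_, ?_, ?_, ?_⟩
  · linear_combination (norm := module) (-1 : ℤ) • h1 + (1 : ℤ) • h3 + (2 : ℤ) • h4 + (-1 : ℤ) • h5 + (1 : ℤ) • h6 + (-1 : ℤ) • h8 + (1 : ℤ) • h9 + (-1 : ℤ) • h10 + (-1 : ℤ) • h11 + (2 : ℤ) • hx
  · linear_combination (norm := module) (-1 : ℤ) • h0 + (1 : ℤ) • h2 + (-1 : ℤ) • h5 + (1 : ℤ) • h9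
  · linear_combination (norm := module) (1 : ℤ) • h0 + (-1 : ℤ) • h1 + (-1 : ℤ) • h2 + (-1 : ℤ) • h3 + (-1 : ℤ) • h4 + (1 : ℤ) • h5 + (1 : ℤ) • h8 + (-1 : ℤ) • h9 + (2 : ℤ) • h10
  · linear_combination (norm := module) (1 : ℤ) • h4 + (-1 : ℤ) • h8 + (-1 : ℤ) • h10
  · linear_combination (norm := module) (-1 : ℤ) • h0 + (-1 : ℤ) • h4 + (-1 : ℤ) • hx
  · linear_combination (norm := module) (1 : ℤ) • h1 + (-1 : ℤ) • h6 + (-1 : ℤ) • h8 + (-1 : ℤ) • h10 + (-1 : ℤ) • hx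
  · linear_combination (norm := module) (-1 : ℤ) • h10
  · linear_combination (norm := module) (1 : ℤ) • h3 + (1 : ℤ) • h4 + (-1 : ℤ) • h8 + (-1 : ℤ) • h10 + (1 : ℤ) • hx
  · linear_combination (norm := module) (1 : ℤ) • h3 + (1 : ℤ) • h4 + (-1 : ℤ) • h8 + (-1 : ℤ) • h10 + (-1 : ℤ) • h11 + (1 : ℤ) • hx

theorem F1 (i : Fin 15) (h : i.val < 12) : F 1 (gen i) = - F 0 (gen i) := by
  have := F_one 0
  rw [← gen_sq i, F_mul, n_gen, if_pos h, zero_add] at this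
  exact eq_neg_of_add_eq_zero_left this

theorem F0z (i : Fin 15) (h : ¬ i.val < 12) : F 0 (gen i) + F 0 (gen i) = 0 := by
  have := F_one 0
  rw [← gen_sq i, F_mul, n_gen, if_neg h, zero_add] at this
  exact this

theorem two0 : (1 + 1 : ZMod 2) = 0 := by decide

theorem pF {a b c d e : Fin 15} (h : gen a * gen b * gen c * gen d * gen e = 1)
    (ha : a.val < 12) (hb : b.val < 12) (hc : ¬ c.val < 12) (hd : d.val < 12) (he : e.val < 12) :
    F 0 (gen e) + -F 0 (gen d) + F 0 (gen c) + F 0 (gen b) + -F 0 (gen a) = 0 ∧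
    F 1 (gen c) = - F 0 (gen c) := by
  have h0 := F_one 0
  have h1 := F_one 1
  rw [← h] at h0 h1
  simp only [F_mul, n_gen, if_pos ha, if_pos hb, if_pos hd, if_pos he, if_neg hc, zero_add,
    add_zero, two0, F1 _ ha, F1 _ hb, F1 _ hd, F1 _ he] at h0 h1
  refine ⟨?_, ?_⟩
  · linear_combination (norm := module) h0
  · linear_combination (norm := module) h0 + h1

theorem q0 : F 0 (gen 8) + -F 0 (gen 1) + F 0 (gen 12) + F 0 (gen 3) + -F 0 (gen 0) = 0 ∧
    F 1 (gen 12) = - F 0 (gen 12) := pF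
  (gen_pent 0 1 2 3 4 (by decide)) (by decide) (by decide) (by decide) (by decide) (by decide)
theorem q1 : F 0 (gen 11) + -F 0 (gen 5) + F 0 (gen 14) + F 0 (gen 0) + -F 0 (gen 4) = 0 ∧
    F 1 (gen 14) = - F 0 (gen 14) := pF
  (gen_pent 0 1 4 2 3 (by decide)) (by decide) (by decide) (by decide) (by decide) (by decide)
theorem q2 : F 0 (gen 7) + -F 0 (gen 11) + F 0 (gen 12) + F 0 (gen 10) + -F 0 (gen 0) = 0 ∧
    F 1 (gen 12) = - F 0 (gen 12) := pF
  (gen_pent 0 3 2 1 4 (by decide)) (by decide) (by decide) (by decide) (by decide) (by decide)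
theorem q3 : F 0 (gen 9) + -F 0 (gen 0) + F 0 (gen 13) + F 0 (gen 5) + -F 0 (gen 1) = 0 ∧
    F 1 (gen 13) = - F 0 (gen 13) := pF
  (gen_pent 0 1 2 4 3 (by decide)) (by decide) (by decide) (by decide) (by decide) (by decide)
theorem q4 : F 0 (gen 11) + -F 0 (gen 3) + F 0 (gen 14) + F 0 (gen 1) + -F 0 (gen 2) = 0 ∧
    F 1 (gen 14) = - F 0 (gen 14) := pF
  (gen_pent 0 1 3 2 4 (by decide)) (by decide) (by decide) (by decide) (by decide) (by decide)
theorem q5 : F 0 (gen 1) + -F 0 (gen 10) + F 0 (gen 13) + F 0 (gen 11) + -F 0 (gen 6) = 0 ∧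
    F 1 (gen 13) = - F 0 (gen 13) := pF
  (gen_pent 0 3 1 2 4 (by decide)) (by decide) (by decide) (by decide) (by decide) (by decide)
theorem q6 : F 0 (gen 8) + -F 0 (gen 4) + F 0 (gen 12) + F 0 (gen 2) + -F 0 (gen 5) = 0 ∧
    F 1 (gen 12) = - F 0 (gen 12) := pF
  (gen_pent 0 1 4 3 2 (by decide)) (by decide) (by decide) (by decide) (by decide) (by decide)
theorem q7 : F 0 (gen 10) + -F 0 (gen 8) + F 0 (gen 14) + F 0 (gen 7) + -F 0 (gen 2) = 0 ∧
    F 1 (gen 14) = - F 0 (gen 14) := pF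
  (gen_pent 0 2 3 1 4 (by decide)) (by decide) (by decide) (by decide) (by decide) (by decide)
theorem q8 : F 0 (gen 9) + -F 0 (gen 2) + F 0 (gen 13) + F 0 (gen 4) + -F 0 (gen 3) = 0 ∧
    F 1 (gen 13) = - F 0 (gen 13) := pF
  (gen_pent 0 1 3 4 2 (by decide)) (by decide) (by decide) (by decide) (by decide) (by decide)
theorem q9 : F 0 (gen 3) + -F 0 (gen 7) + F 0 (gen 13) + F 0 (gen 8) + -F 0 (gen 6) = 0 ∧
    F 1 (gen 13) = - F 0 (gen 13) := pF
  (gen_pent 0 2 1 3 4 (by decide)) (by decide) (by decide) (by decide) (by decide) (by decide)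
theorem q10 : F 0 (gen 10) + -F 0 (gen 9) + F 0 (gen 14) + F 0 (gen 6) + -F 0 (gen 4) = 0 ∧
    F 1 (gen 14) = - F 0 (gen 14) := pF
  (gen_pent 0 2 4 1 3 (by decide)) (by decide) (by decide) (by decide) (by decide) (by decide)
theorem q11 : F 0 (gen 5) + -F 0 (gen 6) + F 0 (gen 12) + F 0 (gen 9) + -F 0 (gen 7) = 0 ∧
    F 1 (gen 12) = - F 0 (gen 12) := pF
  (gen_pent 0 2 1 4 3 (by decide)) (by decide) (by decide) (by decide) (by decide) (by decide)

theorem F1_all (i : Fin 15) : F 1 (gen i) = - F 0 (gen i) := by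
  by_cases h : i.val < 12
  · exact F1 i h
  · have : i = 12 ∨ i = 13 ∨ i = 14 := by revert i; decide
    rcases this with rfl | rfl | rfl
    · exact q0.2
    · exact q3.2
    · exact q1.2

def tor : Fin 6 → A :=
  ![F 0 (gen 8), F 0 (gen 10) - F 0 (gen 11), F 0 (gen 6) - F 0 (gen 9),
    F 0 (gen 12), F 0 (gen 13), F 0 (gen 14)]

theorem tor2 (i : Fin 6) : tor i + tor i = 0 := by
  obtain ⟨h1, h2, h3, -⟩ := lin (F 0 (gen 0)) (F 0 (gen 1)) (F 0 (gen 2)) (F 0 (gen 3)) (F 0 (gen 4))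
    (F 0 (gen 5)) (F 0 (gen 6)) (F 0 (gen 7)) (F 0 (gen 8)) (F 0 (gen 9)) (F 0 (gen 10))
    (F 0 (gen 11)) (F 0 (gen 12)) (F 0 (gen 13)) (F 0 (gen 14)) (F_t 0)
    (F0z 12 (by decide)) (F0z 13 (by decide)) (F0z 14 (by decide))
    q0.1 q1.1 q2.1 q3.1 q4.1 q5.1 q6.1 q7.1 q8.1 q9.1 q10.1 q11.1
  fin_cases i
  · exact h1
  · exact h2
  · exact h3
  · exact F0z 12 (by decide)
  · exact F0z 13 (by decide)
  · exact F0z 14 (by decide)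

def free : Fin 2 → A := ![F 0 (gen 11), F 0 (gen 9)]

def lif (i : Fin 6) : ZMod 2 →+ A :=
  ZMod.lift 2 ⟨zmultiplesHom A (tor i), by
    have := tor2 i
    simp [two_zsmul, this]⟩

theorem lif_one (i) : lif i 1 = tor i := by
  have := ZMod.lift_coe 2 (⟨zmultiplesHom A (tor i), by
    have := tor2 i
    simp [two_zsmul, this]⟩ : {f : ℤ →+ A // f 2 = 0}) 1
  simpa [lif] using this

def Ψ : M →+ A where
  toFun m := ∑ i, m.1 i • free i + ∑ i, lif i (m.2 i)
  map_zero' := by simp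
  map_add' x y := by
    simp only [Prod.fst_add, Prod.snd_add, Pi.add_apply, add_smul, map_add,
      Finset.sum_add_distrib]
    abel

theorem Φ_tor (i) : Φ (tor i) = (0, Pi.single i 1) := by
  fin_cases i <;> simp only [tor, Fin.zero_eta, Fin.mk_one, Fin.reduceFinMk, Matrix.cons_val,
    map_sub, Φ_gen] <;> decide +kernel

theorem Φ_free (i) : Φ (free i) = (Pi.single i 1, 0) := by
  fin_cases i <;> simp only [free, Fin.zero_eta, Fin.mk_one, Fin.reduceFinMk, Matrix.cons_val,
    map_sub, Φ_gen] <;> decide +kernel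

theorem Φ_lif (i) (w : ZMod 2) : Φ (lif i w) = (0, Pi.single i w) := by
  have : w = 0 ∨ w = 1 := by revert w; decide
  rcases this with rfl | rfl
  · simp; rfl
  · rw [lif_one, Φ_tor]

theorem ΦΨ (m : M) : Φ (Ψ m) = m := by
  obtain ⟨v, w⟩ := m
  simp only [Ψ, AddMonoidHom.coe_mk, ZeroHom.coe_mk, map_add, map_sum, map_zsmul, Φ_free, Φ_lif]
  refine Prod.ext ?_ ?_
  · funext j
    fin_cases j <;> simp [Prod.fst_sum]
  · funext j
    simp [Prod.snd_sum, Finset.sum_apply, Pi.single_apply]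

theorem free_mem (i) : free i ∈ Ψ.range := by
  refine ⟨(Pi.single i 1, 0), ?_⟩
  fin_cases i <;> simp [Ψ]

theorem tor_mem (i) : tor i ∈ Ψ.range := by
  refine ⟨(0, Pi.single i 1), ?_⟩
  simp only [Ψ, AddMonoidHom.coe_mk, ZeroHom.coe_mk]
  rw [Finset.sum_eq_single i]
  · simp [lif_one]
  · intro j _ hj
    simp [hj]
  · simp

theorem gen_mem (i) : F 0 (gen i) ∈ Ψ.range := by
  obtain ⟨-, -, -, e1, e2, e3, e4, e5, e7⟩ := lin (F 0 (gen 0)) (F 0 (gen 1)) (F 0 (gen 2)) (F 0 (gen 3)) (F 0 (gen 4))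
    (F 0 (gen 5)) (F 0 (gen 6)) (F 0 (gen 7)) (F 0 (gen 8)) (F 0 (gen 9)) (F 0 (gen 10))
    (F 0 (gen 11)) (F 0 (gen 12)) (F 0 (gen 13)) (F 0 (gen 14)) (F_t 0)
    (F0z 12 (by decide)) (F0z 13 (by decide)) (F0z 14 (by decide))
    q0.1 q1.1 q2.1 q3.1 q4.1 q5.1 q6.1 q7.1 q8.1 q9.1 q10.1 q11.1
  have a : F 0 (gen 11) ∈ Ψ.range := free_mem 0
  have b : F 0 (gen 9) ∈ Ψ.range := free_mem 1
  have m8 : F 0 (gen 8) ∈ Ψ.range := tor_mem 0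
  have s : F 0 (gen 10) - F 0 (gen 11) ∈ Ψ.range := tor_mem 1
  have r : F 0 (gen 6) - F 0 (gen 9) ∈ Ψ.range := tor_mem 2
  have m12 : F 0 (gen 12) ∈ Ψ.range := tor_mem 3
  have m13 : F 0 (gen 13) ∈ Ψ.range := tor_mem 4
  have m14 : F 0 (gen 14) ∈ Ψ.range := tor_mem 5
  have m0 : F 0 (gen 0) ∈ Ψ.range := by
    rw [gen_zero, F_t]; exact zero_mem _
  have m10 : F 0 (gen 10) ∈ Ψ.range := by
    have := add_mem s a; rwa [sub_add_cancel] at this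
  have m6 : F 0 (gen 6) ∈ Ψ.range := by
    have := add_mem r b; rwa [sub_add_cancel] at this
  have m1 : F 0 (gen 1) ∈ Ψ.range := by
    rw [e1]; exact add_mem (add_mem (add_mem b r) s) m13
  have m2 : F 0 (gen 2) ∈ Ψ.range := by
    rw [e2]; exact add_mem (add_mem (add_mem a m8) m12) m14
  have m3 : F 0 (gen 3) ∈ Ψ.range := by
    rw [e3]; exact add_mem (add_mem (add_mem (add_mem (add_mem b r) m8) s) m12) m13
  have m4 : F 0 (gen 4) ∈ Ψ.range := by
    rw [e4]; exact add_mem (add_mem (add_mem a r) s) m14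
  have m5 : F 0 (gen 5) ∈ Ψ.range := by
    rw [e5]; exact add_mem r s
  have m7 : F 0 (gen 7) ∈ Ψ.range := by
    rw [e7]; exact add_mem s m12
  fin_cases i <;> assumption

theorem F_mem_range (x : Gamma 5) : ∀ c, F c x ∈ Ψ.range := by
  induction x using ind with
  | h1 => intro c; rw [F_one]; exact zero_mem _
  | hm q x h ih =>
    intro c
    rw [F_mul]
    refine add_mem ?_ (ih c)
    rw [gg_idx q h]
    generalize c + n x = d
    have : d = 0 ∨ d = 1 := by revert d; decide
    rcases this with rfl | rfl
    · exact gen_mem _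
    · have := neg_mem (gen_mem (idx q))
      rw [← F1_all] at this
      exact this

theorem Ψ_surj : Function.Surjective Ψ := by
  intro a
  obtain ⟨x, hx⟩ := QuotientGroup.mk_surjective (Additive.toMul a)
  have h := F_mem_range (x : Gamma 5) 0
  rw [F_ker] at h
  obtain ⟨m, hm⟩ := h
  refine ⟨m, hm.trans ?_⟩
  exact congrArg Additive.ofMul hx

noncomputable def e : A ≃+ M := (AddEquiv.ofBijective Ψ ⟨fun a b h => by
  rw [← ΦΨ a, ← ΦΨ b, h], Ψ_surj⟩).symm

theorem compl {G H : Type*} [CommGroup G] [Group H] (p : G →* H) (s : H →* G)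
    (h : ∀ x, p (s x) = x) : IsCompl s.range p.ker := by
  constructor
  · rw [Subgroup.disjoint_def]
    rintro x ⟨y, rfl⟩ hx
    rw [MonoidHom.mem_ker, h] at hx
    rw [hx, map_one]
  · rw [codisjoint_iff, eq_top_iff]
    intro x _
    rw [Subgroup.mem_sup]
    exact ⟨s (p x), ⟨_, rfl⟩, (s (p x))⁻¹ * x, by simp [MonoidHom.mem_ker, h], by simp⟩

def pz : M →+ ℤ := (Pi.evalAddMonoidHom (fun _ : Fin 2 => ℤ) 0).comp (AddMonoidHom.fst _ _)
def sz : ℤ →+ M := (AddMonoidHom.inl _ _).comp (AddMonoidHom.single (fun _ : Fin 2 => ℤ) 0)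

theorem pz_sz (x) : pz (sz x) = x := by simp [pz, sz]

end G5

/-- The map sending each generator `(ijkl)` of `Γ_5^4` to `1 ∈ ℤ/2ℤ` if `1 ∈ {i,j,k,l}`
(with 0-based indices: if `0 ∈ {i,j,k,l}`) and to `0` otherwise extends to a well-defined
homomorphism `ν : Γ_5^4 → ℤ/2ℤ`, and the abelianization of `Ker ν` is isomorphic to
`ℤ² ⊕ (ℤ/2ℤ)^6`; in particular the abelianization of `Ker ν` has a `ℤ`-direct summand. -/
theorem gamma_five_nu_kernel :
    ∃ ν : Gamma 5 →* Multiplicative (ZMod 2),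
      (∀ q : Quad 5, qDistinct q →
        ν (gg q) =
          Multiplicative.ofAdd (if (0 : Fin 5) ∈ qFinset q then (1 : ZMod 2) else 0)) ∧
      Nonempty (Abelianization ↥ν.ker ≃*
        Multiplicative ((Fin 2 → ℤ) × (Fin 6 → ZMod 2))) ∧
      ∃ A B : Subgroup (Abelianization ↥ν.ker),
        IsCompl A B ∧ Nonempty (A ≃* Multiplicative ℤ) := by
  refine ⟨G5.ν, ?_, ⟨AddEquiv.toMultiplicativeRight G5.e⟩, ?_⟩
  · intro q hq
    rw [G5.ν_gg, G5.nu, if_pos hq]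
  · let E : Abelianization G5.ν.ker ≃* Multiplicative G5.M := AddEquiv.toMultiplicativeRight G5.e
    let p : Abelianization G5.ν.ker →* Multiplicative ℤ :=
      (AddMonoidHom.toMultiplicative G5.pz).comp E.toMonoidHom
    let s : Multiplicative ℤ →* Abelianization G5.ν.ker :=
      E.symm.toMonoidHom.comp (AddMonoidHom.toMultiplicative G5.sz)
    have h : ∀ x, p (s x) = x := fun x => by
      have : E (E.symm (AddMonoidHom.toMultiplicative G5.sz x)) = _ := E.apply_symm_apply _
      change AddMonoidHom.toMultiplicative G5.pz
        (E (E.symm (AddMonoidHom.toMultiplicative G5.sz x))) = x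
      rw [this]
      exact congrArg Multiplicative.ofAdd (G5.pz_sz x.toAdd)
    exact ⟨s.range, p.ker, G5.compl p s h,
      ⟨(MonoidHom.ofInjective (Function.LeftInverse.injective h)).symm⟩⟩
end

section
/- The group Δ_5^4 has a subgroup G of index 2 whose abelianization is isomorphic to ℤ² ⊕ ℤ/2ℤ; consequently, Δ_5^4 is an infinite non-commutative group. -/
/-- The quadruple `(i, j, k, l)` is strictly increasing: `i < j < k < l`. -/
def qInc {n : ℕ} (q : Quad n) : Prop := q.1 < q.2.1 ∧ q.2.1 < q.2.2.1 ∧ q.2.2.1 < q.2.2.2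

/-- The defining relators of the group `Δ_n^4` (the increasing-order version of `Γ_n^4`):
generators indexed by strictly increasing quadruples (other quadruples are killed),
involutive relations (1), commutativity relations (2) and pentagon relations (3) for
`i < j < k < l < m`. -/
def deltaRels (n : ℕ) : Set (FreeGroup (Quad n)) :=
  {w | ∃ q : Quad n, ¬ qInc q ∧ w = FreeGroup.of q} ∪
  {w | ∃ q : Quad n, qInc q ∧ w = FreeGroup.of q * FreeGroup.of q} ∪
  {w | ∃ q r : Quad n, qInc q ∧ qInc r ∧ (qFinset q ∩ qFinset r).card ≤ 2 ∧
      w = FreeGroup.of q * FreeGroup.of r * (FreeGroup.of q)⁻¹ * (FreeGroup.of r)⁻¹} ∪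
  {w | ∃ i j k l m : Fin n, i < j ∧ j < k ∧ k < l ∧ l < m ∧
      w = FreeGroup.of (i, j, k, l) * FreeGroup.of (i, j, l, m) * FreeGroup.of (j, k, l, m) *
        FreeGroup.of (i, j, k, m) * FreeGroup.of (i, k, l, m)}

/-- The group `Δ_n^4`, the increasing-order version of `Γ_n^4`. -/
abbrev Delta (n : ℕ) : Type := PresentedGroup (deltaRels n)

/-- The generator `(ijkl)` of `Δ_n^4`. -/
def dd {n : ℕ} (q : Quad n) : Delta n := PresentedGroup.of q

namespace DeltaAux

abbrev M : Type := Multiplicative ((Fin 2 → ℤ) × ZMod 2)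

def act : ℤˣ →* MulAut M where
  toFun u :=
    { toFun := fun v => v ^ (u : ℤ)
      invFun := fun v => v ^ (u : ℤ)
      left_inv := fun v => by
        rcases Int.units_eq_one_or u with rfl | rfl <;> simp
      right_inv := fun v => by
        rcases Int.units_eq_one_or u with rfl | rfl <;> simp
      map_mul' := fun v w => mul_zpow v w _ }
  map_one' := by ext1 v; simp
  map_mul' := fun u w => by
    ext1 v
    simp [zpow_mul, mul_comm u w]

abbrev T : Type := M ⋊[act] ℤˣ

lemma act_neg (v : M) : act (-1) v = v⁻¹ := by simp [act]

def mp : M := Multiplicative.ofAdd (![1, 0], 0)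
def mq : M := Multiplicative.ofAdd (![0, 1], 0)
def me : M := Multiplicative.ofAdd (0, 1)

lemma me_sq : me * me = 1 := by
  unfold me
  rw [← ofAdd_add]
  have : ((0, 1) + (0, 1) : (Fin 2 → ℤ) × ZMod 2) = 0 := by
    ext
    · simp
    · decide
  rw [this]; rfl

def gA : T := ⟨1, -1⟩
def gB : T := ⟨mp⁻¹, -1⟩
def gC : T := ⟨mq⁻¹, -1⟩
def gD : T := ⟨mp * mq⁻¹ * me, -1⟩
def gE : T := ⟨me, 1⟩

lemma sq_refl (v : M) : ((⟨v, -1⟩ : T) * ⟨v, -1⟩) = 1 := by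
  ext1 <;> simp [act_neg]

lemma gE_sq : gE * gE = 1 := by
  ext1 <;> simp [gE, me_sq]

lemma penta : gA * gB * gC * gD * gE = 1 := by
  have h := me_sq
  have h' : me⁻¹ = me := inv_eq_of_mul_eq_one_left h
  ext1
  · simp [gA, gB, gC, gD, gE, act_neg, h']
    rw [mul_assoc (mp * mq⁻¹), mul_right_comm me, h]
    simp
  · simp [gA, gB, gC, gD, gE]

def gen (q : Quad 5) : T :=
  if q = (0,1,2,3) then gA else if q = (0,1,3,4) then gB else if q = (1,2,3,4) then gC
  else if q = (0,1,2,4) then gD else if q = (0,2,3,4) then gE else 1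

lemma inc_cases (q : Quad 5) (h : qInc q) : q = (0,1,2,3) ∨ q = (0,1,3,4) ∨ q = (1,2,3,4) ∨
    q = (0,1,2,4) ∨ q = (0,2,3,4) := by
  obtain ⟨i, j, k, l⟩ := q
  simp only [qInc] at h
  simp only [Prod.mk.injEq]
  omega

lemma gen_rels : ∀ r ∈ deltaRels 5, FreeGroup.lift gen r = 1 := by
  intro r hr
  rcases hr with ((⟨q, hq, rfl⟩ | ⟨q, hq, rfl⟩) | ⟨q, r, hq, hr, hc, rfl⟩) |
    ⟨i, j, k, l, m, h1, h2, h3, h4, rfl⟩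
  · rw [FreeGroup.lift_apply_of]
    unfold gen
    split_ifs with h h h h h
    all_goals first | rfl | (exfalso; apply hq; subst h; unfold qInc; decide)
  · rw [map_mul, FreeGroup.lift_apply_of]
    rcases inc_cases q hq with rfl | rfl | rfl | rfl | rfl
    · exact sq_refl _
    · exact sq_refl _
    · exact sq_refl _
    · exact sq_refl _
    · exact gE_sq
  · exfalso
    rcases inc_cases q hq with rfl | rfl | rfl | rfl | rfl <;>
    rcases inc_cases r hr with rfl | rfl | rfl | rfl | rfl <;>
    revert hc <;> decide
  · have : i = 0 ∧ j = 1 ∧ k = 2 ∧ l = 3 ∧ m = 4 := by omega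
    obtain ⟨rfl, rfl, rfl, rfl, rfl⟩ := this
    simp only [map_mul, FreeGroup.lift_apply_of]
    exact penta

def Psi : Delta 5 →* T := PresentedGroup.toGroup gen_rels

def dA : Delta 5 := dd (0,1,2,3)
def dB : Delta 5 := dd (0,1,3,4)
def dC : Delta 5 := dd (1,2,3,4)
def dD : Delta 5 := dd (0,1,2,4)
def dE : Delta 5 := dd (0,2,3,4)

lemma psi_dd (q : Quad 5) : Psi (dd q) = gen q := PresentedGroup.toGroup.of gen_rels

lemma psiA : Psi dA = gA := psi_dd _
lemma psiB : Psi dB = gB := psi_dd _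
lemma psiC : Psi dC = gC := psi_dd _
lemma psiD : Psi dD = gD := psi_dd _
lemma psiE : Psi dE = gE := psi_dd _

lemma dd_sq (q : Quad 5) (h : qInc q) : dd q * dd q = 1 := by
  have : (PresentedGroup.mk (deltaRels 5)) (FreeGroup.of q * FreeGroup.of q) = 1 :=
    PresentedGroup.one_of_mem (Or.inl (Or.inl (Or.inr ⟨q, h, rfl⟩)))
  simp only [map_mul] at this
  exact this

lemma dd_one (q : Quad 5) (h : ¬ qInc q) : dd q = 1 := 
  PresentedGroup.one_of_mem (Or.inl (Or.inl (Or.inl ⟨q, h, rfl⟩)))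

lemma A2 : dA * dA = 1 := dd_sq _ (by unfold qInc; decide)
lemma B2 : dB * dB = 1 := dd_sq _ (by unfold qInc; decide)
lemma C2 : dC * dC = 1 := dd_sq _ (by unfold qInc; decide)
lemma D2 : dD * dD = 1 := dd_sq _ (by unfold qInc; decide)
lemma E2 : dE * dE = 1 := dd_sq _ (by unfold qInc; decide)

lemma pentaD : dA * dB * dC * dD * dE = 1 := by
  have : (PresentedGroup.mk (deltaRels 5)) (FreeGroup.of (0,1,2,3) * FreeGroup.of (0,1,3,4) *
      FreeGroup.of (1,2,3,4) * FreeGroup.of (0,1,2,4) * FreeGroup.of (0,2,3,4)) = 1 :=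
    PresentedGroup.one_of_mem (Or.inr ⟨0,1,2,3,4, by decide, by decide, by decide, by decide, rfl⟩)
  simp only [map_mul] at this
  exact this

/-- the orientation subgroup -/
def G : Subgroup (Delta 5) := (SemidirectProduct.rightHom.comp Psi).ker

instance : G.Normal := by unfold G; infer_instance

lemma mem_G (x : Delta 5) : x ∈ G ↔ (Psi x).right = 1 := Iff.rfl

lemma index_G : G.index = 2 := by
  unfold G
  rw [Subgroup.index_ker]
  have : (SemidirectProduct.rightHom.comp Psi).range = (⊤ : Subgroup ℤˣ) := by
    rw [eq_top_iff]
    intro u _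
    rcases Int.units_eq_one_or u with rfl | rfl
    · exact one_mem _
    · exact ⟨dA, by simp [psiA, gA]⟩
  rw [this]
  simp

abbrev N : Subgroup (Delta 5) := ⁅G, G⁆
abbrev Q : Type := Delta 5 ⧸ N

def pi : Delta 5 →* Q := QuotientGroup.mk' N

lemma pi_comm {x y : Delta 5} (hx : x ∈ G) (hy : y ∈ G) : Commute (pi x) (pi y) := by
  have h : pi (x * y * x⁻¹ * y⁻¹) = 1 := (QuotientGroup.eq_one_iff _).2 (Subgroup.commutator_mem_commutator hx hy)
  simp only [map_mul, map_inv] at h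
  exact mul_inv_eq_iff_eq_mul.1 (mul_inv_eq_one.1 h)

/-- normal form words -/
def w (i j k d : ℤ) : Delta 5 := (dA * dB) ^ i * (dA * dC) ^ j * dE ^ k * dA ^ d

lemma P_mem : dA * dB ∈ G := by simp [mem_G, psiA, psiB, gA, gB]
lemma Q_mem : dA * dC ∈ G := by simp [mem_G, psiA, psiC, gA, gC]
lemma R_mem : dA * dD ∈ G := by simp [mem_G, psiA, psiD, gA, gD]
lemma E_mem : dE ∈ G := by simp [mem_G, psiE, gE]

lemma conj_inv {H : Type*} [Group H] {a b : H} (ha : a * a = 1) (hb : b * b = 1) :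
    SemiconjBy a (a * b) (a * b)⁻¹ := by
  have ha' : a⁻¹ = a := inv_eq_of_mul_eq_one_left ha
  have hb' : b⁻¹ = b := inv_eq_of_mul_eq_one_left hb
  unfold SemiconjBy
  rw [mul_inv_rev, ha', hb', ← mul_assoc, ha, mul_assoc, ha]; simp

lemma conjE : SemiconjBy (pi dA) (pi dE) (pi dE)⁻¹ := by
  have hA : dA⁻¹ = dA := inv_eq_of_mul_eq_one_left A2
  have hP := SemiconjBy.map (conj_inv A2 B2) pi
  have hQ := SemiconjBy.map (conj_inv A2 C2) pi
  have hR := SemiconjBy.map (conj_inv A2 D2) pi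
  have e : dE = ((dA * dB) * (dA * dC)⁻¹ * (dA * dD))⁻¹ := by
    rw [eq_comm, inv_eq_iff_mul_eq_one]
    have hC : dC⁻¹ = dC := inv_eq_of_mul_eq_one_left C2
    have := pentaD
    rw [mul_inv_rev, hC, hA]
    calc _ = dA * dB * dC * (dA * dA) * dD * dE := by group
      _ = 1 := by rw [A2, mul_one, this]
  have pq := pi_comm P_mem Q_mem
  have pr := pi_comm P_mem R_mem
  have qr := pi_comm Q_mem R_mem
  rw [e]
  simp only [map_inv] at hP hQ hR ⊢
  rw [map_mul pi, map_mul pi (dA * dB), map_inv]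
  generalize pi (dA * dB) = p at *
  generalize pi (dA * dC) = q at *
  generalize pi (dA * dD) = r at *
  have h := ((hP.mul_right hQ.inv_right).mul_right hR).inv_right
  convert h using 1
  have c1 : p * q⁻¹ * r = r * q⁻¹ * p := by
    rw [(pq.inv_right).eq, mul_assoc, pr.eq, ← mul_assoc, (qr.inv_left).eq]
  rw [c1]; group

def S (x : Delta 5) : Prop := ∃ i j k d : ℤ, pi x = pi (w i j k d)

lemma S_A {x} (h : S x) : S (dA * x) := by
  obtain ⟨i, j, k, d, h⟩ := h
  refine ⟨-i, -j, -k, d + 1, ?_⟩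
  have hP := SemiconjBy.map (conj_inv A2 B2) pi
  have hQ := SemiconjBy.map (conj_inv A2 C2) pi
  have hE := conjE
  rw [map_mul, h]
  unfold w
  rw [map_inv] at hP hQ
  have := ((hP.zpow_right i).mul_right (hQ.zpow_right j)).mul_right (hE.zpow_right k)
  rw [map_mul pi _ (dA ^ _), map_mul pi _ (dA ^ _), map_mul pi _ (dE ^ _), map_mul pi _ (dE ^ _),
    map_mul pi _ ((dA * dC) ^ _), map_mul pi _ ((dA * dC) ^ _)]
  simp only [map_zpow]
  rw [← mul_assoc, this.eq, add_comm d 1, zpow_add, zpow_one]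
  simp only [inv_zpow', mul_assoc]

lemma S_P {x} (h : S x) : S (dA * dB * x) := by
  obtain ⟨i, j, k, d, h⟩ := h
  refine ⟨1 + i, j, k, d, ?_⟩
  rw [map_mul, h, ← map_mul]
  unfold w
  rw [zpow_add, zpow_one]
  simp only [mul_assoc]

lemma S_Q {x} (h : S x) : S (dA * dC * x) := by
  obtain ⟨i, j, k, d, h⟩ := h
  refine ⟨i, 1 + j, k, d, ?_⟩
  have c := (pi_comm Q_mem P_mem).zpow_right i
  rw [map_mul, h]
  unfold w
  rw [zpow_add, zpow_one]
  simp only [mul_assoc _ _ (dA ^ d), mul_assoc _ _ (dE ^ k * dA ^ d)]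
  rw [map_mul pi (_ ^ i), map_mul pi (_ ^ i), map_zpow, ← mul_assoc, c.eq, mul_assoc, ← map_mul]

lemma S_E {x} (h : S x) : S (dE * x) := by
  obtain ⟨i, j, k, d, h⟩ := h
  refine ⟨i, j, 1 + k, d, ?_⟩
  have c := ((pi_comm E_mem P_mem).zpow_right i).mul_right ((pi_comm E_mem Q_mem).zpow_right j)
  rw [← map_zpow, ← map_zpow, ← map_mul] at c
  rw [map_mul, h]
  unfold w
  rw [zpow_add, zpow_one, mul_assoc (_ * _), map_mul pi (_ * _), ← mul_assoc, c.eq, mul_assoc,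
    ← map_mul, ← map_mul]
  simp only [mul_assoc]

lemma S_B {x} (h : S x) : S (dB * x) := by
  have := S_A (S_P h)
  rwa [← mul_assoc, ← mul_assoc, A2, one_mul] at this

lemma S_C {x} (h : S x) : S (dC * x) := by
  have := S_A (S_Q h)
  rwa [← mul_assoc, ← mul_assoc, A2, one_mul] at this

lemma S_D {x} (h : S x) : S (dD * x) := by
  have := S_C (S_B (S_A (S_E h)))
  have e : dD = dC * dB * dA * dE := by
    have hA : dA⁻¹ = dA := inv_eq_of_mul_eq_one_left A2
    have hB : dB⁻¹ = dB := inv_eq_of_mul_eq_one_left B2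
    have hC : dC⁻¹ = dC := inv_eq_of_mul_eq_one_left C2
    have hE : dE⁻¹ = dE := inv_eq_of_mul_eq_one_left E2
    have h : dD = dC⁻¹ * dB⁻¹ * dA⁻¹ * (dA * dB * dC * dD * dE) * dE⁻¹ := by group
    rw [pentaD, hA, hB, hC, hE, mul_one] at h
    exact h
  rw [e]
  simpa only [mul_assoc] using this

lemma S_dd (q : Quad 5) {x} (h : S x) : S (dd q * x) := by
  by_cases hq : qInc q
  · rcases inc_cases q hq with rfl | rfl | rfl | rfl | rfl
    · exact S_A h
    · exact S_B h
    · exact S_C h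
    · exact S_D h
    · exact S_E h
  · rwa [dd_one q hq, one_mul]

lemma dd_inv (q : Quad 5) : (dd q)⁻¹ = dd q := by
  by_cases hq : qInc q
  · exact inv_eq_of_mul_eq_one_left (dd_sq q hq)
  · rw [dd_one q hq, inv_one]

lemma S_all (x : Delta 5) : S x := by
  have hx : x ∈ Subgroup.closure (Set.range (PresentedGroup.of (rels := deltaRels 5))) := by
    rw [PresentedGroup.closure_range_of]; trivial
  induction hx using Subgroup.closure_induction_left with
  | one => exact ⟨0, 0, 0, 0, by simp [w]⟩
  | mul_left y hy z hz ih =>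
    obtain ⟨q, rfl⟩ := hy
    exact S_dd q ih
  | inv_mul_cancel y hy z hz ih =>
    obtain ⟨q, rfl⟩ := hy
    have := S_dd q ih
    rw [← dd_inv] at this
    exact this

lemma psiP : Psi (dA * dB) = SemidirectProduct.inl mp := by
  rw [map_mul, psiA, psiB]; ext1 <;> simp [gA, gB, act_neg]
lemma psiQ : Psi (dA * dC) = SemidirectProduct.inl mq := by
  rw [map_mul, psiA, psiC]; ext1 <;> simp [gA, gC, act_neg]
lemma psiE' : Psi dE = SemidirectProduct.inl me := psiE
lemma psiA' : Psi dA = SemidirectProduct.inr (-1) := psiA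

lemma psi_w (i j k d : ℤ) : Psi (w i j k d) =
    SemidirectProduct.inl (mp ^ i * mq ^ j * me ^ k) * SemidirectProduct.inr ((-1) ^ d) := by
  unfold w
  rw [map_mul, map_mul, map_mul, map_zpow, map_zpow, map_zpow, map_zpow, psiP, psiQ, psiE', psiA']
  simp only [map_mul, map_zpow]

lemma m_form (i j k : ℤ) : mp ^ i * mq ^ j * me ^ k =
    Multiplicative.ofAdd ((![i, j], (k : ZMod 2)) : (Fin 2 → ℤ) × ZMod 2) := by
  unfold mp mq me
  rw [← ofAdd_zsmul, ← ofAdd_zsmul, ← ofAdd_zsmul, ← ofAdd_add, ← ofAdd_add]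
  congr 1
  ext x
  · fin_cases x <;> simp
  · simp

lemma N_le : N ≤ G := Subgroup.commutator_le_left _ _

/-- the map to `M` -/
def f : G →* M where
  toFun g := (Psi g.1).left
  map_one' := by simp
  map_mul' := fun x y => by
    have : (Psi x.1).right = 1 := x.2
    simp [this]

lemma mem_N_of {x : Delta 5} (h : Psi x = 1) : x ∈ N := by
  obtain ⟨i, j, k, d, hx⟩ := S_all x
  have hn : x⁻¹ * w i j k d ∈ N := QuotientGroup.eq.1 hx
  have hf : ∀ y ∈ N, Psi y = 1 := by
    have : N ≤ Psi.ker := by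
      rw [Subgroup.commutator_le]
      intro a ha b hb
      have h1 : Psi a = SemidirectProduct.inl (Psi a).left := by
        ext1
        · rfl
        · exact ha
      have h2 : Psi b = SemidirectProduct.inl (Psi b).left := by
        ext1
        · rfl
        · exact hb
      rw [MonoidHom.mem_ker, map_commutatorElement, h1, h2, commutatorElement_eq_one_iff_mul_comm,
        ← map_mul, mul_comm, map_mul]
    exact fun y hy => this hy
  have h0 := hf _ hn
  rw [map_mul, map_inv, h, inv_one, one_mul, psi_w, m_form] at h0
  have hl := congrArg SemidirectProduct.left h0
  have hr := congrArg SemidirectProduct.right h0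
  simp only [SemidirectProduct.mul_left, SemidirectProduct.mul_right, SemidirectProduct.left_inl,
    SemidirectProduct.left_inr, SemidirectProduct.right_inl, SemidirectProduct.right_inr, map_one,
    mul_one, one_mul, SemidirectProduct.one_left, SemidirectProduct.one_right] at hl hr
  have hi : i = 0 := congrFun (congrArg Prod.fst hl) 0
  have hj : j = 0 := congrFun (congrArg Prod.fst hl) 1
  have hk : (k : ZMod 2) = 0 := congrArg Prod.snd hl
  have hk' : Even k := (ZMod.intCast_eq_zero_iff_even).1 hk
  have hd : Even d := by
    by_contra hd
    rw [Int.not_even_iff_odd] at hd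
    rw [hd.neg_one_zpow] at hr
    exact absurd hr (by decide)
  obtain ⟨k, rfl⟩ := hk'
  obtain ⟨d, rfl⟩ := hd
  have hw : w i j (k + k) (d + d) = 1 := by
    subst hi hj
    unfold w
    rw [← two_mul, ← two_mul, zpow_mul, zpow_mul, zpow_two, zpow_two, E2, A2]
    simp
  rw [hw, mul_one] at hn
  simpa using hn

lemma ker_f : f.ker = commutator G := by
  apply le_antisymm
  · intro x hx
    have hN : (x : Delta 5) ∈ N := by
      apply mem_N_of
      ext1
      · exact hx
      · exact x.2
    unfold N at hN
    rw [← Subgroup.map_subtype_commutator] at hN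
    obtain ⟨y, hy, e⟩ := hN
    have : y = x := Subtype.ext e
    exact this ▸ hy
  · exact Abelianization.commutator_subset_ker f

lemma f_surj : Function.Surjective f := by
  intro m
  obtain ⟨k, hk⟩ := ZMod.intCast_surjective (Multiplicative.toAdd m).2
  refine ⟨⟨w ((Multiplicative.toAdd m).1 0) ((Multiplicative.toAdd m).1 1) k 0, ?_⟩, ?_⟩
  · rw [mem_G, psi_w, m_form]; simp
  · change (Psi _).left = m
    rw [psi_w, m_form, hk]
    simp
    apply Multiplicative.toAdd.injective
    ext x
    · fin_cases x <;> rfl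
    · rfl

end DeltaAux

open DeltaAux in
/-- The group `Δ_5^4` has a subgroup `G` of index 2 whose abelianization is isomorphic to
`ℤ² ⊕ ℤ/2ℤ`; consequently `Δ_5^4` is an infinite non-commutative group. -/
theorem delta_five_infinite_noncomm :
    (∃ G : Subgroup (Delta 5), G.index = 2 ∧
      Nonempty (Abelianization ↥G ≃* Multiplicative ((Fin 2 → ℤ) × ZMod 2))) ∧
    Infinite (Delta 5) ∧ ∃ a b : Delta 5, a * b ≠ b * a := by
  refine ⟨⟨G, index_G, ⟨?_⟩⟩, ?_, dA, dB, ?_⟩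
  · exact (QuotientGroup.quotientMulEquivOfEq ker_f.symm).trans
      (QuotientGroup.quotientKerEquivOfSurjective f f_surj)
  · have : Infinite M := inferInstanceAs (Infinite ((Fin 2 → ℤ) × ZMod 2))
    have : Infinite G := Infinite.of_surjective f f_surj
    exact Infinite.of_injective (Subtype.val : G → Delta 5) Subtype.val_injective
  · intro h
    have h1 := congrArg (fun x => (Psi x).left) h
    simp [psiA, psiB, gA, gB, act_neg] at h1
    have h2 : (1 : ℤ) = -1 := congrFun (congrArg (fun m : M => (Multiplicative.toAdd m).1) h1) 0
    omega
end
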